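/- Assume d ≥ 3. For every ε > 0 and every U ⊆ (B_2^n)^{d−1} × T: N( U, ρ_A, Σ_{k=0}^{d−2} ε^{d−k} s_k(A) + ε · sup_{(x^2,...,x^d,t)∈U} ĥα_A((x^2,...,x^d)) ) ≤ exp( C(d) ε^{−2} ), where C(d) depends only on d. -/

import Mathlib

/-!
The theorem is a volumetric estimate in Gaussian space combined with Sudakov's minoration.

For a point `z = (x, t)` the tuple `x` is perturbed to `x + ε G`, with `G` a standard Gaussian
tuple. Expanding the multilinear form over the set `I` of perturbed coordinates gives a function
`Phi` of `G`, even in `G`, which dominates both the error `|B(x) t - B(x + ε G) t|` and `ε` times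
the Gaussian width of `B(x + ε G) T`, where `B(y)` is the contraction of `A` against `y`
(`dist_le_Phi`, `bet_le_Phi`). If `E Phi ≤ Q` for all points of a `6 Q`-separated set, then by
Markov's inequality `Phi ≤ 2 Q` on a symmetric set of measure at least `1 / 2`; translated by
`x / ε` that set still has measure at least `exp (-d / (2 ε ^ 2)) / 2` by the Cameron–Martin formula
(`gauss_shift`). If the translated sets of several points share a point `y / ε`, the corresponding
vectors `B(y) t` are `2 Q`-separated, while `ε` times the width of `B(y) T` is at most `2 Q`, so
Sudakov's minoration (`sudakov`) bounds their number by `exp (256 / ε ^ 2)`. Integrating the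
multiplicity bounds the cardinality of the separated set (`packing_bound`).

It remains to bound `E Phi` by `2 ^ (d + 1)` times the covering diameter `Dbd`
(`Phi_integral_le`). The expected norm for a set `I` of Gaussian coordinates is at most its
`L₂` norm, which is a Hilbert–Schmidt norm as Gaussian monomials are orthonormal; by duality it is
bounded by a chaos norm with `P' = ∅` and the block `{0} ∪ I`. The expected widths are chaos norms
with singleton blocks only, `{0}` and those of `I` being Gaussian. Most of these terms are summands
of some `s_k`; the two kinds with a single power of `ε` (norms with `|I| = 1`, and the width with
`I = ∅`) are bounded by a norm of the array contracted in a coordinate outside `I`, hence by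
`hatAlpha`. The numerical factor is absorbed by rescaling `ε`, since each term of `Dbd` carries at
least one power of `ε` (`Dbd_scale`). For large `ε` one ball around the origin suffices.
-/
open MeasureTheory ProbabilityTheory
open scoped Classical

noncomputable section

/-- product of i.i.d. standard Gaussians indexed by `ι`. -/
def stdGaussian (ι : Type*) [Fintype ι] : Measure (ι → ℝ) :=
  Measure.pi fun _ => gaussianReal 0 1

/-- Index type for block Gaussians. -/
abbrev GIdx (d n : ℕ) := Σ J : Finset (Fin d), ({l // l ∈ J} → Fin n)

def IsPartition {d : ℕ} (J : Finset (Fin d)) (P : Finset (Finset (Fin d))) : Prop :=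
  (∀ I ∈ P, I.Nonempty) ∧ (∀ I ∈ P, ∀ I' ∈ P, I ≠ I' → Disjoint I I') ∧ P.sup id = J

def IsPartitionPair {d : ℕ} (S : Finset (Fin d)) (P P' : Finset (Finset (Fin d))) : Prop :=
  Disjoint P P' ∧ IsPartition S (P ∪ P')

/-- nonzero coordinates of `Fin (d+1)`: the coordinates `2,…,d` of the paper. -/
abbrev PIdx (d : ℕ) : Type := {k : Fin (d + 1) // k ≠ 0}

/-- a point of `(ℝ^n)^{d-1} × ℝ^m`. -/
abbrev Pt (n m d : ℕ) : Type := (PIdx d → Fin n → ℝ) × (Fin m → ℝ)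

/-- assembling a full multi-index out of its first coordinate and the rest. -/
def ext0 {n d : ℕ} (i1 : Fin n) (i' : PIdx d → Fin n) : Fin (d + 1) → Fin n :=
  fun k => if h : k = 0 then i1 else i' ⟨k, h⟩

/-- `‖A‖_{P'∣P}` for an array with values indexed by `Fin m`, relative to `T ⊆ ℝ^m`. -/
def chaosNormT {n m d : ℕ} (A : (Fin (d + 1) → Fin n) → Fin m → ℝ)
    (T : Set (Fin m → ℝ)) (P' P : Finset (Finset (Fin (d + 1)))) : ℝ :=
  sSup { r : ℝ | ∃ x : (I : Finset (Fin (d + 1))) → ({l // l ∈ I} → Fin n) → ℝ,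
    (∀ I ∈ P, ∑ v : {l // l ∈ I} → Fin n, x I v ^ 2 ≤ 1) ∧
    r = ∫ ω : GIdx (d + 1) n → ℝ,
        sSup { s : ℝ | ∃ t ∈ T, s = ∑ i : Fin (d + 1) → Fin n, ∑ j : Fin m,
          (∏ I ∈ P, x I fun l => i l.1) * (∏ J ∈ P', ω ⟨J, fun l => i l.1⟩) *
            A i j * t j }
        ∂ stdGaussian (GIdx (d + 1) n) }

/-- `s_k(A)`. -/
def sNorm {n m d : ℕ} (A : (Fin (d + 1) → Fin n) → Fin m → ℝ)
    (T : Set (Fin m → ℝ)) (k : ℕ) : ℝ :=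
  ∑ PP ∈ Finset.univ.filter (fun PP :
      Finset (Finset (Fin (d + 1))) × Finset (Finset (Fin (d + 1))) =>
      IsPartitionPair Finset.univ PP.1 PP.2 ∧ PP.1.card = k),
    chaosNormT A T PP.2 PP.1

/-- the pseudometric `ρ_A`. -/
def rhoA {n m d : ℕ} (A : (Fin (d + 1) → Fin n) → Fin m → ℝ) (z w : Pt n m d) : ℝ :=
  Real.sqrt (∑ i1 : Fin n,
    (∑ i' : PIdx d → Fin n, ∑ j : Fin m, A (ext0 i1 i') j *
      ((∏ k, w.1 k (i' k)) * w.2 j - (∏ k, z.1 k (i' k)) * z.2 j)) ^ 2)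

/-- `N(S, ρ, ε)`: the minimal number of closed balls of diameter `ε` (radius `ε/2`)
covering `S`. -/
def covNum {β : Type*} (S : Set β) (ρ : β → β → ℝ) (ε : ℝ) : ℝ :=
  sInf { N : ℝ | ∃ c : Finset β, (c.card : ℝ) = N ∧
    S ⊆ ⋃ x ∈ c, { y | ρ x y ≤ ε / 2 } }

/-- `F_A(U)`. -/
def FA {n m d : ℕ} (A : (Fin (d + 1) → Fin n) → Fin m → ℝ) (U : Set (Pt n m d)) : ℝ :=
  ∫ ω : Fin n → ℝ, sSup { s : ℝ | ∃ z ∈ U,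
      s = ∑ i : Fin (d + 1) → Fin n, ∑ j : Fin m,
        ω (i 0) * (∏ k : PIdx d, z.1 k (i k.1)) * A i j * z.2 j }
    ∂ stdGaussian (Fin n)

/-- `Δ_A(U)`, the diameter of `U` with respect to `ρ_A`. -/
def DeltaA {n m d : ℕ} (A : (Fin (d + 1) → Fin n) → Fin m → ℝ)
    (U : Set (Pt n m d)) : ℝ :=
  sSup { r : ℝ | ∃ z ∈ U, ∃ w ∈ U, r = rhoA A z w }

/-- `(B_2^n)^{d-1} × T`. -/
def ballSet (n m d : ℕ) (T : Set (Fin m → ℝ)) : Set (Pt n m d) :=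
  { z | (∀ k, ∑ j, z.1 k j ^ 2 ≤ 1) ∧ z.2 ∈ T }

/-- `W^U_I(α_A)`. -/
def WUI {n m d : ℕ} (A : (Fin (d + 1) → Fin n) → Fin m → ℝ)
    (U : Set (Pt n m d)) (I : Finset (PIdx d)) : ℝ :=
  sSup { r : ℝ | ∃ z ∈ U, r = ∫ ω : PIdx d × Fin n → ℝ,
    Real.sqrt (∑ i1 : Fin n, (∑ i' : PIdx d → Fin n, ∑ j : Fin m,
      A (ext0 i1 i') j *
        (∏ k : PIdx d, if k ∈ I then ω (k, i' k) else z.1 k (i' k)) * z.2 j) ^ 2)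
    ∂ stdGaussian (PIdx d × Fin n) }

/-- `V^U_I(β_A)`. -/
def VUI {n m d : ℕ} (A : (Fin (d + 1) → Fin n) → Fin m → ℝ)
    (T : Set (Fin m → ℝ)) (U : Set (Pt n m d)) (I : Finset (PIdx d)) : ℝ :=
  sSup { r : ℝ | ∃ z ∈ U, r = ∫ ω : PIdx d × Fin n → ℝ,
    (∫ g : Fin n → ℝ, sSup { s : ℝ | ∃ t' ∈ T,
        s = ∑ i1 : Fin n, ∑ i' : PIdx d → Fin n, ∑ j : Fin m,
          A (ext0 i1 i') j * g i1 *
            (∏ k : PIdx d, if k ∈ I then ω (k, i' k) else z.1 k (i' k)) * t' j }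
      ∂ stdGaussian (Fin n))
    ∂ stdGaussian (PIdx d × Fin n) }

/-- `W^U_d(α_A, s)`. -/
def Wd {n m d : ℕ} (A : (Fin (d + 1) → Fin n) → Fin m → ℝ)
    (U : Set (Pt n m d)) (s : ℝ) : ℝ :=
  ∑ k ∈ Finset.Icc 1 d, s ^ k *
    ∑ I ∈ Finset.univ.filter (fun I : Finset (PIdx d) => I.card = k), WUI A U I

/-- `V^U_d(β_A, s)`. -/
def Vd {n m d : ℕ} (A : (Fin (d + 1) → Fin n) → Fin m → ℝ)
    (T : Set (Fin m → ℝ)) (U : Set (Pt n m d)) (s : ℝ) : ℝ :=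
  ∑ k ∈ Finset.range (d + 1), s ^ (k + 1) *
    ∑ I ∈ Finset.univ.filter (fun I : Finset (PIdx d) => I.card = k), VUI A T U I

/-- `‖A ⋅_j x_j‖_{P'∣P}`: the norm of the contraction of `A` in coordinate `j0`
against the vector `xj`. -/
def chaosNormTFix {n m d : ℕ} (A : (Fin (d + 1) → Fin n) → Fin m → ℝ)
    (T : Set (Fin m → ℝ)) (P' P : Finset (Finset (Fin (d + 1))))
    (j0 : Fin (d + 1)) (xj : Fin n → ℝ) : ℝ :=
  sSup { r : ℝ | ∃ x : (I : Finset (Fin (d + 1))) → ({l // l ∈ I} → Fin n) → ℝ,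
    (∀ I ∈ P, ∑ v : {l // l ∈ I} → Fin n, x I v ^ 2 ≤ 1) ∧
    r = ∫ ω : GIdx (d + 1) n → ℝ,
        sSup { s : ℝ | ∃ t ∈ T, s = ∑ i : Fin (d + 1) → Fin n, ∑ j : Fin m,
          (∏ I ∈ P, x I fun l => i l.1) * xj (i j0) *
            (∏ J ∈ P', ω ⟨J, fun l => i l.1⟩) * A i j * t j }
        ∂ stdGaussian (GIdx (d + 1) n) }

/-- the norm `α̂_A`. -/
def hatAlpha {n m d : ℕ} (A : (Fin (d + 1) → Fin n) → Fin m → ℝ)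
    (T : Set (Fin m → ℝ)) (x : PIdx d → Fin n → ℝ) : ℝ :=
  ∑ j : PIdx d,
    ∑ PP ∈ Finset.univ.filter (fun PP :
        Finset (Finset (Fin (d + 1))) × Finset (Finset (Fin (d + 1))) =>
        IsPartitionPair (Finset.univ.erase j.1) PP.1 PP.2 ∧ PP.1.card = d - 1),
      chaosNormTFix A T PP.2 PP.1 j.1 (x j)

/-- `α̂_A(U)`. -/
def hatAlphaSup {n m d : ℕ} (A : (Fin (d + 1) → Fin n) → Fin m → ℝ)
    (T : Set (Fin m → ℝ)) (U : Set (Pt n m d)) : ℝ :=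
  sSup { r : ℝ | ∃ z ∈ U, r = hatAlpha A T z.1 }

end

/-! ### Finite-dimensional standard Gaussian measures -/

instance stdGaussian_isProb (ι : Type*) [Fintype ι] :
    IsProbabilityMeasure (_root_.stdGaussian ι) := by
  unfold _root_.stdGaussian; infer_instance

lemma gauss_one_dim (a : ℝ) :
    gaussianReal a 1 = (gaussianReal 0 1).withDensity
      (fun x => ENNReal.ofReal (Real.exp (a * x - a ^ 2 / 2))) := by
  rw [gaussianReal_of_var_ne_zero _ one_ne_zero, gaussianReal_of_var_ne_zero _ one_ne_zero,
    ← withDensity_mul _ (measurable_gaussianPDF _ _) (by fun_prop)]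
  congr 1
  ext x
  simp only [gaussianPDF, Pi.mul_apply]
  rw [← ENNReal.ofReal_mul (gaussianPDFReal_nonneg _ _ _)]
  congr 1
  simp only [gaussianPDFReal, mul_assoc, ← Real.exp_add]
  congr 2
  push_cast
  ring

/-- Cameron–Martin formula for a finite product of standard Gaussians. -/
lemma gauss_map_add {ι : Type*} [Fintype ι] (a : ι → ℝ) :
    (_root_.stdGaussian ι).map (fun g => g + a) = (_root_.stdGaussian ι).withDensity
      (fun g => ENNReal.ofReal (Real.exp (∑ i, a i * g i - (∑ i, a i ^ 2) / 2))) := by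
  have h1 : (_root_.stdGaussian ι).map (fun g => g + a)
      = Measure.pi (fun i => gaussianReal (a i) 1) := by
    have := Measure.pi_map_pi (μ := fun _ : ι => gaussianReal 0 1)
      (f := fun i (x : ℝ) => x + a i) (fun i => by fun_prop)
    simp only [gaussianReal_map_add_const, zero_add] at this
    exact this
  rw [h1]
  refine Measure.pi_eq fun s hs => ?_
  rw [withDensity_apply _ (MeasurableSet.univ_pi hs),
    ← lintegral_indicator (MeasurableSet.univ_pi hs)]
  have hind := iIndepFun_pi (μ := fun _ : ι => gaussianReal 0 1)
    (X := fun i (x : ℝ) => (s i).indicator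
      (fun x => ENNReal.ofReal (Real.exp (a i * x - a i ^ 2 / 2))) x)
    (fun i => (Measurable.indicator (by fun_prop) (hs i)).aemeasurable)
  have hm : ∀ i, Measurable fun x : ι → ℝ => (s i).indicator
      (fun x => ENNReal.ofReal (Real.exp (a i * x - a i ^ 2 / 2))) (x i) := fun i =>
    (Measurable.indicator (by fun_prop) (hs i)).comp (measurable_pi_apply i)
  have key := lintegral_prod_eq_prod_lintegral_of_indepFun (Finset.univ)
    (fun i (x : ι → ℝ) => (s i).indicator
      (fun x => ENNReal.ofReal (Real.exp (a i * x - a i ^ 2 / 2))) (x i)) hind hm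
  calc _ = ∫⁻ x : ι → ℝ, (∏ i, (s i).indicator
      (fun x => ENNReal.ofReal (Real.exp (a i * x - a i ^ 2 / 2))) (x i))
        ∂ _root_.stdGaussian ι := by
        refine lintegral_congr fun x => ?_
        by_cases hx : x ∈ Set.univ.pi s
        · rw [Set.indicator_of_mem hx]
          have : ∀ i, (s i).indicator
            (fun x => ENNReal.ofReal (Real.exp (a i * x - a i ^ 2 / 2))) (x i)
            = ENNReal.ofReal (Real.exp (a i * x i - a i ^ 2 / 2)) := fun i =>
              Set.indicator_of_mem (hx i (Set.mem_univ i)) _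
          simp_rw [this]
          rw [← ENNReal.ofReal_prod_of_nonneg (fun i _ => (Real.exp_pos _).le), ← Real.exp_sum,
            Finset.sum_sub_distrib, Finset.sum_div]
        · rw [Set.indicator_of_notMem hx]
          simp only [Set.mem_pi, Set.mem_univ, true_imp_iff, not_forall] at hx
          obtain ⟨i, hi⟩ := hx
          exact (Finset.prod_eq_zero (Finset.mem_univ i) (Set.indicator_of_notMem hi _)).symm
    _ = _ := by
        unfold _root_.stdGaussian
        rw [key]
        refine Finset.prod_congr rfl fun i _ => ?_
        rw [gauss_one_dim (a i), withDensity_apply _ (hs i), ← lintegral_indicator (hs i)]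
        exact (measurePreserving_eval (fun _ : ι => gaussianReal 0 1) i).lintegral_comp
          (Measurable.indicator (by fun_prop) (hs i))

lemma gauss_map_neg (ι : Type*) [Fintype ι] :
    (_root_.stdGaussian ι).map (fun g => -g) = _root_.stdGaussian ι := by
  have := Measure.pi_map_pi (μ := fun _ : ι => gaussianReal 0 1)
      (f := fun i (x : ℝ) => - x) (fun i => by fun_prop)
  simp only [gaussianReal_map_neg, neg_zero] at this
  exact this

/-- Translating a symmetric set by `a` decreases its Gaussian measure at most by the factor
`exp (-|a|² / 2)`. -/
lemma gauss_shift {ι : Type*} [Fintype ι] (a : ι → ℝ) (S : Set (ι → ℝ)) (hS : MeasurableSet S)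
    (hsym : ∀ g ∈ S, -g ∈ S) :
    Real.exp (-(∑ i, a i ^ 2) / 2) * (_root_.stdGaussian ι).real S
      ≤ (_root_.stdGaussian ι).real {g | g - a ∈ S} := by
  set μ := _root_.stdGaussian ι with hμ
  have hadd : ∀ b : ι → ℝ, μ {g | g + b ∈ S} = ∫⁻ g in S,
      ENNReal.ofReal (Real.exp (∑ i, b i * g i - (∑ i, b i ^ 2) / 2)) ∂μ := by
    intro b
    have := congrArg (fun ν => ν S) (gauss_map_add b)
    simp only [← hμ] at this
    rw [Measure.map_apply (by fun_prop) hS, withDensity_apply _ hS] at this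
    exact this
  have hmeas : MeasurableSet {g | g + a ∈ S} := (measurable_id.add_const a) hS
  have hneg : μ {g | g + a ∈ S} = μ {g | g + -a ∈ S} := by
    conv_lhs => rw [hμ, ← gauss_map_neg, Measure.map_apply (by fun_prop) hmeas]
    congr 1
    ext g
    constructor
    · intro h
      have := hsym _ h
      simpa [add_comm] using this
    · intro h
      have := hsym _ h
      simpa [add_comm] using this
  have hsum : 2 * (ENNReal.ofReal (Real.exp (-(∑ i, a i ^ 2) / 2)) * μ S)
      ≤ 2 * μ {g | g + -a ∈ S} := by
    calc _ = ∫⁻ g in S, 2 * ENNReal.ofReal (Real.exp (-(∑ i, a i ^ 2) / 2)) ∂μ := by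
          rw [setLIntegral_const, mul_assoc]
      _ ≤ ∫⁻ g in S, (ENNReal.ofReal (Real.exp (∑ i, a i * g i - (∑ i, a i ^ 2) / 2)) +
            ENNReal.ofReal (Real.exp (∑ i, (-a) i * g i - (∑ i, (-a) i ^ 2) / 2))) ∂μ := by
          refine lintegral_mono fun g => ?_
          rw [← ENNReal.ofReal_add (Real.exp_pos _).le (Real.exp_pos _).le,
            show (2 : ENNReal) = ENNReal.ofReal 2 by simp, ← ENNReal.ofReal_mul (by norm_num)]
          refine ENNReal.ofReal_le_ofReal ?_
          simp only [Pi.neg_apply, neg_mul, Finset.sum_neg_distrib, neg_sq, sub_eq_add_neg,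
            Real.exp_add, neg_div]
          have h1 : 2 ≤ Real.exp (∑ i, a i * g i) + Real.exp (-∑ i, a i * g i) := by
            have h2 := Real.one_le_cosh (∑ i, a i * g i)
            rw [Real.cosh_eq] at h2
            linarith
          nlinarith [Real.exp_pos (-((∑ i, a i ^ 2) / 2))]
      _ = μ {g | g + a ∈ S} + μ {g | g + -a ∈ S} := by
          rw [lintegral_add_left (by fun_prop), hadd, hadd]
      _ = _ := by rw [hneg, two_mul]
  have h2 : ENNReal.ofReal (Real.exp (-(∑ i, a i ^ 2) / 2)) * μ S ≤ μ {g | g + -a ∈ S} :=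
    (ENNReal.mul_le_mul_iff_right (by simp) (by simp)).1 hsum
  have h3 := ENNReal.toReal_mono (measure_ne_top _ _) h2
  rw [ENNReal.toReal_mul, ENNReal.toReal_ofReal (Real.exp_pos _).le] at h3
  simpa [measureReal_def, sub_eq_add_neg] using h3

lemma gauss_integrable_exp {ι : Type*} [Fintype ι] (c : ℝ) :
    Integrable (fun ω : ι → ℝ => Real.exp (c * ∑ i, |ω i|)) (_root_.stdGaussian ι) := by
  have h1 : Integrable (fun x : ℝ => Real.exp (c * |x|)) (gaussianReal 0 1) :=
    integrable_exp_mul_abs (integrable_exp_mul_gaussianReal c)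
      (integrable_exp_mul_gaussianReal (-c))
  have := Integrable.fintype_prod (μ := fun _ : ι => gaussianReal 0 1)
    (f := fun _ x => Real.exp (c * |x|)) (fun _ => h1)
  refine this.congr (Filter.Eventually.of_forall fun ω => ?_)
  simp only [← Real.exp_sum, Finset.mul_sum]

/-- Measurable functions dominated by `C exp (c Σ |ωᵢ|)` are integrable; this covers every
polynomial in Gaussian variables. -/
lemma gauss_integrable_of_le {ι : Type*} [Fintype ι] {f : (ι → ℝ) → ℝ}
    (hf : AEStronglyMeasurable f (_root_.stdGaussian ι)) (C c : ℝ)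
    (h : ∀ ω, |f ω| ≤ C * Real.exp (c * ∑ i, |ω i|)) :
    Integrable f (_root_.stdGaussian ι) :=
  ((gauss_integrable_exp c).const_mul C).mono' hf
    (Filter.Eventually.of_forall fun ω => by simpa using h ω)

lemma gauss_integral_cos {ι : Type*} [Fintype ι] (v : ι → ℝ) :
    ∫ g : ι → ℝ, Real.cos (∑ i, v i * g i) ∂ _root_.stdGaussian ι
      = Real.exp (-(∑ i, v i ^ 2) / 2) := by
  have hC : ∫ g : ι → ℝ, Complex.exp (((∑ i, v i * g i : ℝ) : ℂ) * Complex.I)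
      ∂ _root_.stdGaussian ι = ((Real.exp (-(∑ i, v i ^ 2) / 2) : ℝ) : ℂ) := by
    have h1 : ∀ g : ι → ℝ, Complex.exp (((∑ i, v i * g i : ℝ) : ℂ) * Complex.I)
        = ∏ i, Complex.exp ((v i : ℂ) * (g i : ℂ) * Complex.I) := by
      intro g
      rw [← Complex.exp_sum, ← Finset.sum_mul]
      push_cast
      rfl
    simp_rw [h1]
    unfold _root_.stdGaussian
    rw [integral_fintype_prod_eq_prod
      (f := fun i (x : ℝ) => Complex.exp ((v i : ℂ) * (x : ℂ) * Complex.I))]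
    simp_rw [← charFun_apply_real, charFun_gaussianReal]
    rw [← Complex.exp_sum]
    push_cast
    congr 1
    simp [Finset.sum_div, neg_div]
  have h_integ : Integrable (fun g : ι → ℝ =>
      Complex.exp (((∑ i, v i * g i : ℝ) : ℂ) * Complex.I)) (_root_.stdGaussian ι) := by
    refine (integrable_const (1 : ℝ)).mono' (Continuous.aestronglyMeasurable (by fun_prop))
      (Filter.Eventually.of_forall fun g => ?_)
    rw [Complex.norm_exp_ofReal_mul_I]
  have h2 := congrArg Complex.re hC
  rw [Complex.ofReal_re] at h2
  rw [← h2]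
  have h3 := integral_re (𝕜 := ℂ) h_integ
  simp only [RCLike.re_to_complex] at h3
  rw [← h3]
  simp only [Complex.exp_ofReal_mul_I_re]

lemma gauss_integrable_abs_inner {ι : Type*} [Fintype ι] (v : ι → ℝ) :
    Integrable (fun g : ι → ℝ => |∑ i, v i * g i|) (_root_.stdGaussian ι) := by
  refine gauss_integrable_of_le (Continuous.aestronglyMeasurable (by fun_prop))
    (∑ i, |v i|) 1 fun ω => ?_
  rw [abs_abs, one_mul, Finset.sum_mul]
  refine (Finset.abs_sum_le_sum_abs _ _).trans (Finset.sum_le_sum fun i _ => ?_)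
  rw [abs_mul]
  gcongr
  have h1 : |ω i| ≤ ∑ i, |ω i| :=
    Finset.single_le_sum (f := fun i => |ω i|) (fun i _ => abs_nonneg _) (Finset.mem_univ i)
  linarith [Real.add_one_le_exp (∑ i, |ω i|)]

/-- The `L₁` norm of a Gaussian linear form controls its Euclidean norm. The bound comes from
`1 - cos u ≤ |u|` and the characteristic function. -/
lemma gauss_abs_lower {ι : Type*} [Fintype ι] (v : ι → ℝ) :
    Real.sqrt (∑ i, v i ^ 2) ≤ 4 * ∫ g : ι → ℝ, |∑ i, v i * g i| ∂ _root_.stdGaussian ι := by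
  set r := Real.sqrt (∑ i, v i ^ 2) with hr
  have hnn : 0 ≤ ∑ i, v i ^ 2 := Finset.sum_nonneg fun i _ => sq_nonneg _
  by_cases h0 : r = 0
  · rw [h0]; positivity
  have hrpos : 0 < r := lt_of_le_of_ne (Real.sqrt_nonneg _) (Ne.symm h0)
  have hcos := gauss_integral_cos (fun i => v i / r)
  have hsum : ∑ i, (v i / r) ^ 2 = 1 := by
    simp_rw [div_pow]
    rw [← Finset.sum_div, hr, Real.sq_sqrt hnn, div_self]
    intro h; rw [hr, h] at h0; simp at h0
  rw [hsum] at hcos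
  have hle : 1 - Real.exp (-1 / 2)
      ≤ ∫ g : ι → ℝ, |∑ i, v i / r * g i| ∂ _root_.stdGaussian ι := by
    have hci : Integrable (fun g : ι → ℝ => Real.cos (∑ i, v i / r * g i))
        (_root_.stdGaussian ι) :=
      (integrable_const (1 : ℝ)).mono' (Continuous.aestronglyMeasurable (by fun_prop))
        (Filter.Eventually.of_forall fun g => by simpa using Real.abs_cos_le_one _)
    have h1 : ∫ g : ι → ℝ, (1 - Real.cos (∑ i, v i / r * g i)) ∂ _root_.stdGaussian ι
        = 1 - Real.exp (-1 / 2) := by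
      rw [integral_sub (integrable_const _) hci, hcos]; simp
    rw [← h1]
    refine integral_mono ((integrable_const _).sub hci) (gauss_integrable_abs_inner _)
      fun g => ?_
    have h2 := Real.abs_cos_sub_cos_le 0 (∑ i, v i / r * g i)
    simp only [Real.cos_zero, zero_sub, abs_neg] at h2
    exact (le_abs_self _).trans h2
  have h4 : (1 : ℝ) / 4 ≤ 1 - Real.exp (-1 / 2) := by
    have h5 : Real.exp (-1 / 2) ≤ 1 / (1 + 1 / 2) := by
      rw [neg_div, Real.exp_neg, ← one_div]
      gcongr
      linarith [Real.add_one_le_exp (1 / 2 : ℝ)]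
    norm_num at h5 ⊢
    linarith
  have h6 : ∀ g : ι → ℝ, |∑ i, v i / r * g i| = r⁻¹ * |∑ i, v i * g i| := by
    intro g
    have : ∑ i, v i / r * g i = r⁻¹ * ∑ i, v i * g i := by
      rw [Finset.mul_sum]; exact Finset.sum_congr rfl fun i _ => by ring
    rw [this, abs_mul, abs_of_pos (inv_pos.2 hrpos)]
  simp_rw [h6] at hle
  rw [integral_const_mul] at hle
  have h7 := mul_le_mul_of_nonneg_left (h4.trans hle) hrpos.le
  rw [← mul_assoc, mul_inv_cancel₀ h0, one_mul] at h7
  linarith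

lemma markov_half {Ω : Type*} [MeasurableSpace Ω] (μ : Measure Ω) [IsProbabilityMeasure μ]
    {f : Ω → ℝ} (hf : Integrable f μ) (h0 : ∀ x, 0 ≤ f x) {w : ℝ} (hw : ∫ x, f x ∂μ ≤ w)
    (hm : MeasurableSet {x | f x ≤ 2 * w}) :
    1 / 2 ≤ μ.real {x | f x ≤ 2 * w} := by
  have hw0 : 0 ≤ w := (integral_nonneg h0).trans hw
  have hc : μ.real {x | f x ≤ 2 * w}ᶜ = 1 - μ.real {x | f x ≤ 2 * w} := probReal_compl_eq_one_sub hm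
  rcases hw0.eq_or_lt with h | h
  · have hz : ∫ x, f x ∂μ = 0 := le_antisymm (hw.trans h.symm.le) (integral_nonneg h0)
    rw [integral_eq_zero_iff_of_nonneg h0 hf] at hz
    have : μ {x | f x ≤ 2 * w} = 1 := by
      rw [← mem_ae_iff_prob_eq_one hm]
      filter_upwards [hz] with x hx
      simp [hx, ← h]
    simp only [measureReal_def, this]
    norm_num
  · have hmk := mul_meas_ge_le_integral_of_nonneg (Filter.Eventually.of_forall h0) hf (2 * w)
    have hsub : μ.real {x | f x ≤ 2 * w}ᶜ ≤ μ.real {x | 2 * w ≤ f x} := by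
      refine measureReal_mono fun x hx => ?_
      simp only [Set.mem_compl_iff, Set.mem_ofPred_eq, not_le] at hx ⊢
      exact hx.le
    have : 2 * w * μ.real {x | f x ≤ 2 * w}ᶜ ≤ w :=
      (mul_le_mul_of_nonneg_left hsub (by positivity)).trans (hmk.trans hw)
    rw [hc] at this
    nlinarith

lemma gauss_map_inj {ι κ : Type*} [Fintype ι] [Fintype κ] (e : ι → κ)
    (he : Function.Injective e) :
    (_root_.stdGaussian κ).map (fun ω i => ω (e i)) = _root_.stdGaussian ι := by
  have hind : iIndepFun (fun (k : κ) (ω : κ → ℝ) => ω k) (_root_.stdGaussian κ) :=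
    iIndepFun_pi (μ := fun _ : κ => gaussianReal 0 1) (X := fun _ x => x)
      (fun _ => by fun_prop)
  have h2 := (hind.precomp he).map_fun_eq_pi_map
    (fun i => (measurable_pi_apply (e i)).aemeasurable)
  rw [h2]
  unfold _root_.stdGaussian
  congr 1
  ext1 i
  exact (measurePreserving_eval (fun _ : κ => gaussianReal 0 1) (e i)).map_eq

lemma gauss_map_sum (ι κ : Type*) [Fintype ι] [Fintype κ] :
    (_root_.stdGaussian (ι ⊕ κ)).map
      (fun ω => ((fun i => ω (Sum.inl i), fun k => ω (Sum.inr k)) : (ι → ℝ) × (κ → ℝ)))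
      = (_root_.stdGaussian ι).prod (_root_.stdGaussian κ) :=
  (measurePreserving_sumPiEquivProdPi (X := fun _ : ι ⊕ κ => ℝ)
    (fun _ => gaussianReal 0 1)).map_eq

/-! ### Support functions of bounded symmetric sets -/

/-- `T` is nonempty, symmetric and contained in the cube `[-M, M]^m`. -/
def Adm {m : ℕ} (T : Set (Fin m → ℝ)) (M : ℝ) : Prop :=
  T.Nonempty ∧ (∀ t ∈ T, -t ∈ T) ∧ 0 ≤ M ∧ ∀ t ∈ T, ∀ j, |t j| ≤ M

/-- The support function `c ↦ sup_{t ∈ T} ⟨c, t⟩`. -/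
noncomputable def supp {m : ℕ} (T : Set (Fin m → ℝ)) (c : Fin m → ℝ) : ℝ :=
  sSup {s : ℝ | ∃ t ∈ T, s = ∑ j, c j * t j}

section supp
variable {m : ℕ} {T : Set (Fin m → ℝ)} {M : ℝ}

lemma inner_le_bound (hT : Adm T M) (c : Fin m → ℝ) {t : Fin m → ℝ} (ht : t ∈ T) :
    ∑ j, c j * t j ≤ M * ∑ j, |c j| := by
  rw [Finset.mul_sum]
  refine Finset.sum_le_sum fun j _ => (le_abs_self _).trans ?_
  rw [abs_mul, mul_comm]
  gcongr
  exact hT.2.2.2 t ht j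

lemma le_supp (hT : Adm T M) (c : Fin m → ℝ) {t : Fin m → ℝ} (ht : t ∈ T) :
    ∑ j, c j * t j ≤ supp T c := by
  refine le_csSup ⟨M * ∑ j, |c j|, ?_⟩ ⟨t, ht, rfl⟩
  rintro s ⟨t', ht', rfl⟩
  exact inner_le_bound hT c ht'

lemma supp_le (hT : Adm T M) (c : Fin m → ℝ) {b : ℝ}
    (h : ∀ t ∈ T, ∑ j, c j * t j ≤ b) : supp T c ≤ b := by
  obtain ⟨t, ht⟩ := hT.1
  refine csSup_le ⟨_, t, ht, rfl⟩ ?_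
  rintro s ⟨t', ht', rfl⟩
  exact h t' ht'

lemma abs_le_supp (hT : Adm T M) (c : Fin m → ℝ) {t : Fin m → ℝ} (ht : t ∈ T) :
    |∑ j, c j * t j| ≤ supp T c := by
  refine abs_le'.2 ⟨le_supp hT c ht, ?_⟩
  have := le_supp hT c (hT.2.1 t ht)
  simpa using this

lemma supp_nonneg (hT : Adm T M) (c : Fin m → ℝ) : 0 ≤ supp T c := by
  obtain ⟨t, ht⟩ := hT.1
  exact (abs_nonneg _).trans (abs_le_supp hT c ht)

lemma supp_le_bound (hT : Adm T M) (c : Fin m → ℝ) : supp T c ≤ M * ∑ j, |c j| :=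
  supp_le hT c fun _ ht => inner_le_bound hT c ht

lemma supp_add_le (hT : Adm T M) (c c' : Fin m → ℝ) :
    supp T (fun j => c j + c' j) ≤ supp T c + supp T c' := by
  refine supp_le hT _ fun t ht => ?_
  simp only [add_mul, Finset.sum_add_distrib]
  exact add_le_add (le_supp hT c ht) (le_supp hT c' ht)

lemma supp_smul_le (hT : Adm T M) (a : ℝ) (c : Fin m → ℝ) :
    supp T (fun j => a * c j) ≤ |a| * supp T c := by
  refine supp_le hT _ fun t ht => ?_
  simp only [mul_assoc, ← Finset.mul_sum]
  refine (le_abs_self _).trans ?_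
  rw [abs_mul]
  gcongr
  exact abs_le_supp hT c ht

lemma supp_sum_le (hT : Adm T M) {κ : Type*} (s : Finset κ) (c : κ → Fin m → ℝ) :
    supp T (fun j => ∑ k ∈ s, c k j) ≤ ∑ k ∈ s, supp T (c k) := by
  refine supp_le hT _ fun t ht => ?_
  simp only [Finset.sum_mul]
  rw [Finset.sum_comm]
  exact Finset.sum_le_sum fun k _ => le_supp hT (c k) ht

lemma supp_sub_le (hT : Adm T M) (c c' : Fin m → ℝ) :
    |supp T c - supp T c'| ≤ M * ∑ j, |c j - c' j| := by
  have key : ∀ c c' : Fin m → ℝ, supp T c - supp T c' ≤ M * ∑ j, |c j - c' j| := by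
    intro c c'
    have h := supp_add_le hT c' (fun j => c j - c' j)
    simp only [add_sub_cancel] at h
    linarith [supp_le_bound hT (fun j => c j - c' j)]
  refine abs_le'.2 ⟨key c c', ?_⟩
  have := key c' c
  simp_rw [abs_sub_comm (c' _)] at this
  linarith

lemma supp_continuous (hT : Adm T M) : Continuous (supp T) := by
  refine continuous_iff_continuousAt.2 fun c => ?_
  refine tendsto_iff_dist_tendsto_zero.2 ?_
  have h : Filter.Tendsto (fun x : Fin m → ℝ => M * ∑ j, |x j - c j|) (nhds c) (nhds 0) := by
    have : Continuous fun x : Fin m → ℝ => M * ∑ j, |x j - c j| := by fun_prop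
    simpa using this.tendsto c
  exact squeeze_zero (fun _ => dist_nonneg) (fun x => supp_sub_le hT x c) h

end supp

/-! ### Gaussian width of the image of `T` under a matrix, and Sudakov's minoration -/

/-- `E sup_{t ∈ T} ⟨g, B t⟩`, the Gaussian width of `B T`. -/
noncomputable def bet {n m : ℕ} (T : Set (Fin m → ℝ)) (B : Fin n → Fin m → ℝ) : ℝ :=
  ∫ g : Fin n → ℝ, supp T (fun j => ∑ i, g i * B i j) ∂ _root_.stdGaussian (Fin n)

/-- The vector `B t` in Euclidean space. -/
noncomputable def mv {n m : ℕ} (B : Fin n → Fin m → ℝ) (t : Fin m → ℝ) :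
    EuclideanSpace ℝ (Fin n) := WithLp.toLp 2 fun i => ∑ j, B i j * t j

section sudakov
variable {n m : ℕ} {T : Set (Fin m → ℝ)} {M : ℝ}

lemma mv_norm (B : Fin n → Fin m → ℝ) (t : Fin m → ℝ) :
    ‖mv B t‖ = Real.sqrt (∑ i, (∑ j, B i j * t j) ^ 2) := by
  simp [mv, EuclideanSpace.norm_eq]

lemma width_continuous (hT : Adm T M) (B : Fin n → Fin m → ℝ) :
    Continuous fun g : Fin n → ℝ => supp T (fun j => ∑ i, g i * B i j) :=
  (supp_continuous hT).comp (by fun_prop)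

lemma abs_le_exp_sum {ι : Type*} [Fintype ι] (ω : ι → ℝ) (i : ι) :
    |ω i| ≤ Real.exp (∑ i, |ω i|) := by
  have h1 : |ω i| ≤ ∑ i, |ω i| :=
    Finset.single_le_sum (f := fun i => |ω i|) (fun i _ => abs_nonneg _) (Finset.mem_univ i)
  linarith [Real.add_one_le_exp (∑ i, |ω i|)]

lemma width_integrable (hT : Adm T M) (B : Fin n → Fin m → ℝ) :
    Integrable (fun g : Fin n → ℝ => supp T (fun j => ∑ i, g i * B i j))
      (_root_.stdGaussian (Fin n)) := by
  refine gauss_integrable_of_le (width_continuous hT B).aestronglyMeasurable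
    (M * ∑ j, ∑ i, |B i j|) 1 fun g => ?_
  rw [abs_of_nonneg (supp_nonneg hT _), one_mul]
  refine (supp_le_bound hT _).trans ?_
  rw [mul_assoc]
  refine mul_le_mul_of_nonneg_left ?_ hT.2.2.1
  simp_rw [Finset.sum_mul]
  refine Finset.sum_le_sum fun j _ => (Finset.abs_sum_le_sum_abs _ _).trans
    (Finset.sum_le_sum fun i _ => ?_)
  rw [abs_mul, mul_comm]
  gcongr
  exact abs_le_exp_sum g i

lemma bet_nonneg (hT : Adm T M) (B : Fin n → Fin m → ℝ) : 0 ≤ bet T B :=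
  integral_nonneg fun _ => supp_nonneg hT _

lemma bet_sum_le (hT : Adm T M) {κ : Type*} (s : Finset κ) (B : κ → Fin n → Fin m → ℝ) :
    bet T (fun i j => ∑ k ∈ s, B k i j) ≤ ∑ k ∈ s, bet T (B k) := by
  unfold bet
  rw [← integral_finsetSum _ (fun k _ => width_integrable hT (B k))]
  refine integral_mono (width_integrable hT _)
    (integrable_finsetSum _ fun k _ => width_integrable hT (B k)) fun g => ?_
  refine le_trans (le_of_eq ?_) (supp_sum_le hT s fun k j => ∑ i, g i * B k i j)
  congr 1
  ext j
  rw [Finset.sum_comm]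
  simp only [Finset.mul_sum]

lemma bet_smul_le (hT : Adm T M) (a : ℝ) (B : Fin n → Fin m → ℝ) :
    bet T (fun i j => a * B i j) ≤ |a| * bet T B := by
  unfold bet
  rw [← integral_const_mul]
  refine integral_mono (width_integrable hT _) ((width_integrable hT B).const_mul _) fun g => ?_
  refine le_trans (le_of_eq ?_) (supp_smul_le hT a fun j => ∑ i, g i * B i j)
  congr 1
  ext j
  rw [Finset.mul_sum]
  exact Finset.sum_congr rfl fun i _ => by ring

lemma inner_mv_le (hT : Adm T M) (B : Fin n → Fin m → ℝ) {t : Fin m → ℝ} (ht : t ∈ T)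
    (g : Fin n → ℝ) :
    |∑ i, mv B t i * g i| ≤ supp T (fun j => ∑ i, g i * B i j) := by
  refine le_trans (le_of_eq ?_) (abs_le_supp hT _ ht)
  congr 1
  simp only [mv, Finset.sum_mul]
  rw [Finset.sum_comm]
  exact Finset.sum_congr rfl fun i _ => Finset.sum_congr rfl fun j _ => by ring

lemma norm_le_bet (hT : Adm T M) (B : Fin n → Fin m → ℝ) {t : Fin m → ℝ} (ht : t ∈ T) :
    ‖mv B t‖ ≤ 4 * bet T B := by
  have h := gauss_abs_lower (fun i => mv B t i)
  rw [mv_norm]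
  refine h.trans (mul_le_mul_of_nonneg_left ?_ (by norm_num))
  exact integral_mono (gauss_integrable_abs_inner _) (width_integrable hT B)
    fun g => inner_mv_le hT B ht g

/-- One scale of Sudakov's bound. The translates of the symmetric set `{g | h g ≤ 2 w}`, where `h`
is the support function of `B T`, by suitable multiples of `B t - c` are disjoint because
`|B t - B t'|² ≤ 2 h (B t - B t')`, and each of them has a large Gaussian measure. -/
lemma sudakov_step (hT : Adm T M) (B : Fin n → Fin m → ℝ) {w : ℝ} (hw : 0 < w)
    (hB : bet T B ≤ w) {ε : ℝ} (hε : 0 < ε) (S : Finset (Fin m → ℝ)) (hS : ∀ t ∈ S, t ∈ T)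
    (c : EuclideanSpace ℝ (Fin n)) (hc : ∀ t ∈ S, ‖mv B t - c‖ ≤ 2 * ε)
    (hsep : ∀ t ∈ S, ∀ t' ∈ S, t ≠ t' → ε < ‖mv B t - mv B t'‖) :
    (S.card : ℝ) ≤ 2 * Real.exp (128 * w ^ 2 / ε ^ 2) := by
  set μ := _root_.stdGaussian (Fin n)
  set h : (Fin n → ℝ) → ℝ := fun g => supp T (fun j => ∑ i, g i * B i j) with hh
  have hcont : Continuous h := width_continuous hT B
  have hsub : ∀ u v : Fin n → ℝ, h (u - v) ≤ h u + h v := by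
    intro u v
    have h1 := supp_add_le hT (fun j => ∑ i, u i * B i j) (fun j => (-1) * ∑ i, v i * B i j)
    have h2 := supp_smul_le hT (-1) (fun j => ∑ i, v i * B i j)
    rw [abs_neg, abs_one, one_mul] at h2
    refine le_trans (le_of_eq ?_) (h1.trans (by simpa [hh] using h2))
    simp only [hh]
    congr 1
    ext j
    simp only [Pi.sub_apply, sub_mul, Finset.sum_sub_distrib]
    ring
  have hsm : ∀ (a : ℝ) (u : Fin n → ℝ), h (fun i => a * u i) ≤ |a| * h u := by
    intro a u
    refine le_trans (le_of_eq ?_) (supp_smul_le hT a fun j => ∑ i, u i * B i j)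
    simp only [hh]
    congr 1
    ext j
    rw [Finset.mul_sum]
    exact Finset.sum_congr rfl fun i _ => by ring
  set E : Set (Fin n → ℝ) := {g | h g ≤ 2 * w} with hE
  have hEm : MeasurableSet E := (isClosed_le hcont continuous_const).measurableSet
  have hEhalf : 1 / 2 ≤ μ.real E :=
    markov_half μ (width_integrable hT B) (fun _ => supp_nonneg hT _) hB hEm
  have hEsym : ∀ g ∈ E, -g ∈ E := by
    intro g hg
    have h1 := hsm (-1) g
    rw [abs_neg, abs_one, one_mul] at h1
    have h2 : (fun i => -1 * g i) = -g := by ext i; simp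
    rw [h2] at h1
    exact h1.trans hg
  set s : ℝ := ε ^ 2 / (8 * w) with hs
  have hspos : 0 < s := by positivity
  set a : (Fin m → ℝ) → Fin n → ℝ := fun t i => s⁻¹ * (mv B t i - c i) with ha
  have hmeas : ∀ t ∈ S, 1 / 2 * Real.exp (-(128 * w ^ 2 / ε ^ 2)) ≤ μ.real {g | g - a t ∈ E} := by
    intro t ht
    refine le_trans ?_ (gauss_shift (a t) E hEm hEsym)
    rw [mul_comm]
    refine mul_le_mul (Real.exp_le_exp.2 ?_) hEhalf (by norm_num) (Real.exp_pos _).le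
    have h1 : ∑ i, a t i ^ 2 = s⁻¹ ^ 2 * ‖mv B t - c‖ ^ 2 := by
      rw [EuclideanSpace.norm_sq_eq, Finset.mul_sum]
      exact Finset.sum_congr rfl fun i _ => by simp [ha, mul_pow]
    have h2 : ‖mv B t - c‖ ^ 2 ≤ (2 * ε) ^ 2 := by
      gcongr
      exact hc t ht
    have h3 : ∑ i, a t i ^ 2 ≤ 2 * (128 * w ^ 2 / ε ^ 2) := by
      rw [h1]
      calc _ ≤ s⁻¹ ^ 2 * (2 * ε) ^ 2 := by gcongr
        _ = _ := by rw [hs]; field_simp; norm_num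
    linarith
  have hdisj : Set.PairwiseDisjoint (S : Set (Fin m → ℝ)) fun t => {g | g - a t ∈ E} := by
    intro t ht t' ht' hne
    refine Set.disjoint_left.2 fun g hg hg' => ?_
    have h1 : h (fun i => a t i - a t' i) ≤ 4 * w := by
      have h2 := hsub (g - a t') (g - a t)
      have h3 : g - a t' - (g - a t) = fun i => a t i - a t' i := by
        ext i; simp
      rw [h3] at h2
      have h4 : h (g - a t) ≤ 2 * w := hg
      have h5 : h (g - a t') ≤ 2 * w := hg'
      linarith
    set u : Fin n → ℝ := fun i => mv B t i - mv B t' i with hu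
    have h6 : h u ≤ s * (4 * w) := by
      have h7 := hsm s (fun i => a t i - a t' i)
      have h8 : (fun i => s * (a t i - a t' i)) = u := by
        ext i
        simp only [ha, hu]
        field_simp
        ring
      rw [h8, abs_of_pos hspos] at h7
      exact h7.trans (by gcongr)
    have h9 : ‖mv B t - mv B t'‖ ^ 2 ≤ 2 * h u := by
      have h10 := inner_mv_le hT B (hS t ht) u
      have h11 := inner_mv_le hT B (hS t' ht') u
      have h12 : ‖mv B t - mv B t'‖ ^ 2 = ∑ i, mv B t i * u i - ∑ i, mv B t' i * u i := by
        rw [EuclideanSpace.norm_sq_eq, ← Finset.sum_sub_distrib]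
        exact Finset.sum_congr rfl fun i _ => by simp [hu]; ring
      rw [h12]
      have := (abs_le.1 h10).2
      have := (abs_le.1 h11).1
      simp only [hh]
      linarith
    have h13 : ‖mv B t - mv B t'‖ ^ 2 ≤ ε ^ 2 := by
      refine h9.trans ((mul_le_mul_of_nonneg_left h6 (by norm_num)).trans (le_of_eq ?_))
      rw [hs]; field_simp; norm_num
    have h14 := hsep t ht t' ht' hne
    nlinarith [norm_nonneg (mv B t - mv B t')]
  have hcount : (S.card : ℝ) * (1 / 2 * Real.exp (-(128 * w ^ 2 / ε ^ 2))) ≤ 1 := by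
    calc _ = ∑ t ∈ S, (1 / 2 * Real.exp (-(128 * w ^ 2 / ε ^ 2))) := by simp
      _ ≤ ∑ t ∈ S, μ.real {g | g - a t ∈ E} := Finset.sum_le_sum hmeas
      _ = μ.real (⋃ t ∈ S, {g | g - a t ∈ E}) := by
          rw [measureReal_biUnion_finset hdisj]
          exact fun t _ => (measurable_id.sub_const (a t)) hEm
      _ ≤ 1 := measureReal_le_one
  rw [Real.exp_neg] at hcount
  have hpos := Real.exp_pos (128 * w ^ 2 / ε ^ 2)
  field_simp at hcount
  linarith

/-- If the cardinalities of the finite `r`-separated subsets of `U` are bounded, a maximal such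
subset is an `r`-net of `U`. -/
lemma exists_net {α : Type*} (ρ : α → α → ℝ) (r : ℝ) (hsymm : ∀ x y, ρ x y = ρ y x)
    (U : Set α) (b : ℕ)
    (hb : ∀ S : Finset α, (∀ x ∈ S, x ∈ U) → (∀ x ∈ S, ∀ y ∈ S, x ≠ y → r < ρ x y) →
      S.card ≤ b) :
    ∃ S : Finset α, (∀ x ∈ S, x ∈ U) ∧ (∀ x ∈ S, ∀ y ∈ S, x ≠ y → r < ρ x y) ∧
      ∀ y ∈ U, y ∈ S ∨ ∃ x ∈ S, ρ x y ≤ r := by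
  let Q : ℕ → Prop := fun k => ∃ S : Finset α, (∀ x ∈ S, x ∈ U) ∧
    (∀ x ∈ S, ∀ y ∈ S, x ≠ y → r < ρ x y) ∧ S.card = k
  have hQ0 : Q 0 := ⟨∅, by simp, by simp, rfl⟩
  have hspec := Nat.findGreatest_spec (P := Q) (Nat.zero_le b) hQ0
  obtain ⟨S, hSU, hS, hcard⟩ := hspec
  refine ⟨S, hSU, hS, fun y hy => ?_⟩
  by_contra hcon
  push Not at hcon
  obtain ⟨hyS, hfar⟩ := hcon
  have hins : Q (insert y S).card := by
    refine ⟨insert y S, ?_, ?_, rfl⟩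
    · intro x hx
      rcases Finset.mem_insert.1 hx with rfl | hx
      · exact hy
      · exact hSU x hx
    · intro x hx z hz hne
      rcases Finset.mem_insert.1 hx with h1 | h1 <;> rcases Finset.mem_insert.1 hz with h2 | h2
      · exact absurd (h1.trans h2.symm) hne
      · rw [h1, hsymm]; exact hfar z h2
      · rw [h2]; exact hfar x h1
      · exact hS x h1 z h2 hne
  have hle : (insert y S).card ≤ b := by
    obtain ⟨S', h1, h2, h3⟩ := hins
    exact h3 ▸ hb S' h1 h2
  have := Nat.le_findGreatest hle hins
  rw [Finset.card_insert_of_notMem hyS, ← hcard] at this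
  omega

/-- Sudakov's minoration, by downward induction over dyadic scales. -/
lemma sudakov_aux (hT : Adm T M) (B : Fin n → Fin m → ℝ) {w : ℝ} (hw : 0 < w)
    (hB : bet T B ≤ w) (k : ℕ) : ∀ ε : ℝ, 0 < ε → 8 * w < 2 ^ k * ε →
    ∀ S : Finset (Fin m → ℝ), (∀ t ∈ S, t ∈ T) →
    (∀ t ∈ S, ∀ t' ∈ S, t ≠ t' → ε < ‖mv B t - mv B t'‖) →
    (S.card : ℝ) ≤ Real.exp (256 * w ^ 2 / ε ^ 2) := by
  have base : ∀ ε : ℝ, 0 < ε → 8 * w < ε → ∀ S : Finset (Fin m → ℝ), (∀ t ∈ S, t ∈ T) →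
      (∀ t ∈ S, ∀ t' ∈ S, t ≠ t' → ε < ‖mv B t - mv B t'‖) →
      (S.card : ℝ) ≤ Real.exp (256 * w ^ 2 / ε ^ 2) := by
    intro ε hε h8 S hS hsep
    have h1 : S.card ≤ 1 := by
      refine Finset.card_le_one.2 fun t ht t' ht' => ?_
      by_contra hne
      have h2 := hsep t ht t' ht' hne
      have h3 := norm_sub_le (mv B t) (mv B t')
      have h4 := norm_le_bet hT B (hS t ht)
      have h5 := norm_le_bet hT B (hS t' ht')
      linarith
    have h2 : (S.card : ℝ) ≤ 1 := by exact_mod_cast h1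
    exact h2.trans (Real.one_le_exp (by positivity))
  induction k with
  | zero => intro ε hε h8; exact base ε hε (by simpa using h8)
  | succ k ih =>
    intro ε hε h8 S hS hsep
    by_cases hbig : 8 * w < ε
    · exact base ε hε hbig S hS hsep
    push Not at hbig
    obtain ⟨S', hS'S, hS'sep, hnet⟩ := exists_net (fun t t' => ‖mv B t - mv B t'‖) (2 * ε)
      (fun x y => norm_sub_rev _ _) (S : Set (Fin m → ℝ)) S.card
      (fun R hR _ => Finset.card_le_card fun x hx => by simpa using hR x hx)
    have hS'card := ih (2 * ε) (by positivity) (by rw [pow_succ] at h8; linarith) S'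
      (fun t ht => hS t (by simpa using hS'S t ht)) hS'sep
    have hcover : S ⊆ S'.biUnion fun s => S.filter fun t => ‖mv B t - mv B s‖ ≤ 2 * ε := by
      intro t ht
      rw [Finset.mem_biUnion]
      rcases hnet t (by simpa using ht) with h | ⟨s, hs, h⟩
      · exact ⟨t, h, Finset.mem_filter.2 ⟨ht, by simp; positivity⟩⟩
      · exact ⟨s, hs, Finset.mem_filter.2 ⟨ht, by rw [norm_sub_rev]; exact h⟩⟩
    have hpiece : ∀ s ∈ S', ((S.filter fun t => ‖mv B t - mv B s‖ ≤ 2 * ε).card : ℝ)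
        ≤ 2 * Real.exp (128 * w ^ 2 / ε ^ 2) := by
      intro s _
      refine sudakov_step hT B hw hB hε _ (fun t ht => hS t (Finset.mem_filter.1 ht).1) (mv B s)
        (fun t ht => (Finset.mem_filter.1 ht).2) fun t ht t' ht' hne =>
          hsep t (Finset.mem_filter.1 ht).1 t' (Finset.mem_filter.1 ht').1 hne
    have h1 : (S.card : ℝ) ≤ S'.card * (2 * Real.exp (128 * w ^ 2 / ε ^ 2)) := by
      have h2 : (S.card : ℝ) ≤ ∑ s ∈ S', ((S.filter fun t => ‖mv B t - mv B s‖ ≤ 2 * ε).card : ℝ) := by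
        exact_mod_cast (Finset.card_le_card hcover).trans Finset.card_biUnion_le
      refine h2.trans ((Finset.sum_le_sum hpiece).trans ?_)
      simp
    -- `w / ε ≥ 1 / 8` absorbs the factor `2` into the exponential
    have h2 : (2 : ℝ) ≤ Real.exp (64 * w ^ 2 / ε ^ 2) := by
      have h3 : 1 ≤ 64 * w ^ 2 / ε ^ 2 := by
        rw [le_div_iff₀ (by positivity)]
        nlinarith
      linarith [Real.add_one_le_exp (64 * w ^ 2 / ε ^ 2)]
    calc (S.card : ℝ) ≤ S'.card * (2 * Real.exp (128 * w ^ 2 / ε ^ 2)) := h1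
      _ ≤ Real.exp (256 * w ^ 2 / (2 * ε) ^ 2) *
          (Real.exp (64 * w ^ 2 / ε ^ 2) * Real.exp (128 * w ^ 2 / ε ^ 2)) := by gcongr
      _ = Real.exp (256 * w ^ 2 / ε ^ 2) := by
        rw [← Real.exp_add, ← Real.exp_add]
        congr 1
        field_simp
        norm_num

/-- Sudakov's minoration in scale-free form: a separation exceeding `ε` times the width leaves room
for at most `exp (256 / ε ^ 2)` points. The degenerate case of zero width is included. -/
lemma sudakov (hT : Adm T M) (B : Fin n → Fin m → ℝ) {q ε : ℝ} (hq : 0 ≤ q) (hε : 0 < ε)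
    (hB : ε * bet T B ≤ q) (S : Finset (Fin m → ℝ)) (hS : ∀ t ∈ S, t ∈ T)
    (hsep : ∀ t ∈ S, ∀ t' ∈ S, t ≠ t' → q < ‖mv B t - mv B t'‖) :
    (S.card : ℝ) ≤ Real.exp (256 * ε⁻¹ ^ 2) := by
  rcases hq.eq_or_lt with h0 | hpos
  · have hb : bet T B ≤ 0 := by
      by_contra hcon
      push Not at hcon
      nlinarith [mul_pos hε hcon]
    have h1 : S.card ≤ 1 := by
      refine Finset.card_le_one.2 fun t ht t' ht' => ?_
      by_contra hne
      have h2 := hsep t ht t' ht' hne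
      have h3 := norm_sub_le (mv B t) (mv B t')
      have h4 := norm_le_bet hT B (hS t ht)
      have h5 := norm_le_bet hT B (hS t' ht')
      linarith
    have h2 : (S.card : ℝ) ≤ 1 := by exact_mod_cast h1
    exact h2.trans (Real.one_le_exp (by positivity))
  · obtain ⟨k, hk⟩ := pow_unbounded_of_one_lt (8 * (q / ε) / q) (one_lt_two (α := ℝ))
    have h1 := sudakov_aux hT B (w := q / ε) (by positivity)
      (by rw [le_div_iff₀ hε]; linarith) k q hpos (by rwa [div_lt_iff₀ hpos] at hk) S hS hsep
    refine h1.trans (le_of_eq ?_)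
    congr 1
    field_simp

end sudakov

/-! ### Expansion of the multilinear form around a point -/

/-- The contraction of `A` against `y k` in every coordinate `k ≠ 0`, as an `n × m` matrix. -/
noncomputable def Bm {n m d : ℕ} (A : (Fin (d + 1) → Fin n) → Fin m → ℝ)
    (y : PIdx d → Fin n → ℝ) : Fin n → Fin m → ℝ :=
  fun i1 j => ∑ i' : PIdx d → Fin n, A (ext0 i1 i') j * ∏ k, y k (i' k)

/-- The tuple with `G` in the coordinates from `I` and `x` in the remaining ones. -/
noncomputable def mix {n d : ℕ} (I : Finset (PIdx d)) (G : PIdx d × Fin n → ℝ)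
    (x : PIdx d → Fin n → ℝ) : PIdx d → Fin n → ℝ :=
  fun k i => if k ∈ I then G (k, i) else x k i

section expansion
variable {n m d : ℕ} {T : Set (Fin m → ℝ)} {M : ℝ} (A : (Fin (d + 1) → Fin n) → Fin m → ℝ)

lemma rhoA_eq (z w : Pt n m d) :
    rhoA A z w = ‖mv (Bm A w.1) w.2 - mv (Bm A z.1) z.2‖ := by
  unfold rhoA
  rw [EuclideanSpace.norm_eq]
  congr 1
  refine Finset.sum_congr rfl fun i1 _ => ?_
  rw [Real.norm_eq_abs, sq_abs]
  congr 1
  simp only [mv, Bm, PiLp.sub_apply, Finset.sum_mul]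
  rw [← Finset.sum_sub_distrib, Finset.sum_comm]
  refine Finset.sum_congr rfl fun j _ => ?_
  rw [← Finset.sum_sub_distrib]
  exact Finset.sum_congr rfl fun i' _ => by ring

lemma prod_mix (I : Finset (PIdx d)) (G : PIdx d × Fin n → ℝ) (x : PIdx d → Fin n → ℝ)
    (i' : PIdx d → Fin n) :
    ∏ k, mix I G x k (i' k) = (∏ k ∈ I, G (k, i' k)) * ∏ k ∈ Iᶜ, x k (i' k) := by
  simp only [mix]
  rw [← Finset.prod_mul_prod_compl I]
  congr 1
  · exact Finset.prod_congr rfl fun k hk => by simp [hk]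
  · exact Finset.prod_congr rfl fun k hk => by simp [Finset.mem_compl.1 hk]

lemma Bm_mix_smul (I : Finset (PIdx d)) (c : ℝ) (G : PIdx d × Fin n → ℝ)
    (x : PIdx d → Fin n → ℝ) (i : Fin n) (j : Fin m) :
    Bm A (mix I (fun q => c * G q) x) i j = c ^ I.card * Bm A (mix I G x) i j := by
  simp only [Bm, prod_mix, Finset.prod_mul_distrib, Finset.prod_const, Finset.mul_sum]
  exact Finset.sum_congr rfl fun i' _ => by ring

lemma Bm_add (G : PIdx d × Fin n → ℝ) (x : PIdx d → Fin n → ℝ) (i : Fin n) (j : Fin m) :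
    Bm A (fun k i => G (k, i) + x k i) i j = ∑ I : Finset (PIdx d), Bm A (mix I G x) i j := by
  simp only [Bm, prod_mix]
  rw [Finset.sum_comm]
  refine Finset.sum_congr rfl fun i' _ => ?_
  rw [← Finset.mul_sum, Finset.prod_add, Finset.powerset_univ]
  congr 1

lemma mix_empty (G : PIdx d × Fin n → ℝ) (x : PIdx d → Fin n → ℝ) : mix ∅ G x = x := by
  ext k i; simp [mix]

/-- The even function of `G` dominating both the error made when `x` is replaced by `x + ε G`
and `ε` times the Gaussian width at `x + ε G`. -/
noncomputable def Phi (T : Set (Fin m → ℝ)) (ε : ℝ) (z : Pt n m d)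
    (G : PIdx d × Fin n → ℝ) : ℝ :=
  ∑ I ∈ Finset.univ.erase (∅ : Finset (PIdx d)), ε ^ I.card * ‖mv (Bm A (mix I G z.1)) z.2‖
    + ∑ I : Finset (PIdx d), ε ^ (I.card + 1) * bet T (Bm A (mix I G z.1))

lemma mv_smul (c : ℝ) (B : Fin n → Fin m → ℝ) (t : Fin m → ℝ) :
    mv (fun i j => c * B i j) t = c • mv B t := by
  ext i
  simp [mv, Finset.mul_sum, mul_assoc]

lemma mv_sum {κ : Type*} (s : Finset κ) (B : κ → Fin n → Fin m → ℝ) (t : Fin m → ℝ) :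
    mv (fun i j => ∑ k ∈ s, B k i j) t = ∑ k ∈ s, mv (B k) t := by
  ext i
  simp only [mv, Finset.sum_mul, WithLp.ofLp_sum, Finset.sum_apply]
  exact Finset.sum_comm

lemma Phi_nonneg (hT : Adm T M) {ε : ℝ} (hε : 0 < ε) (z : Pt n m d)
    (G : PIdx d × Fin n → ℝ) : 0 ≤ Phi A T ε z G := by
  unfold Phi
  refine add_nonneg (Finset.sum_nonneg fun I _ => by positivity)
    (Finset.sum_nonneg fun I _ => mul_nonneg (by positivity) (bet_nonneg hT _))

lemma Phi_neg_le (hT : Adm T M) {ε : ℝ} (hε : 0 < ε) (z : Pt n m d)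
    (G : PIdx d × Fin n → ℝ) : Phi A T ε z (-G) ≤ Phi A T ε z G := by
  have hG : (-G) = fun q => (-1) * G q := by ext q; simp
  have hB : ∀ I, Bm A (mix I (-G) z.1) = fun i j => (-1) ^ I.card * Bm A (mix I G z.1) i j := by
    intro I; ext i j; rw [hG, Bm_mix_smul]
  have habs : ∀ k : ℕ, |(-1 : ℝ) ^ k| = 1 := fun k => by simp
  unfold Phi
  refine add_le_add (Finset.sum_le_sum fun I _ => ?_) (Finset.sum_le_sum fun I _ => ?_)
  · rw [hB, mv_smul, norm_smul, Real.norm_eq_abs, habs, one_mul]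
  · refine mul_le_mul_of_nonneg_left ?_ (by positivity)
    rw [hB]
    refine (bet_smul_le hT _ _).trans ?_
    rw [habs, one_mul]

lemma Bm_scaled (ε : ℝ) (G : PIdx d × Fin n → ℝ) (x : PIdx d → Fin n → ℝ) :
    Bm A (fun k i => ε * G (k, i) + x k i)
      = fun i j => ∑ I : Finset (PIdx d), ε ^ I.card * Bm A (mix I G x) i j := by
  ext i j
  have := Bm_add A (fun q => ε * G q) x i j
  rw [this]
  exact Finset.sum_congr rfl fun I _ => Bm_mix_smul A I ε G x i j

lemma dist_le_Phi (hT : Adm T M) {ε : ℝ} (hε : 0 < ε) (z : Pt n m d)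
    (G : PIdx d × Fin n → ℝ) :
    ‖mv (Bm A fun k i => ε * G (k, i) + z.1 k i) z.2 - mv (Bm A z.1) z.2‖ ≤ Phi A T ε z G := by
  rw [Bm_scaled, mv_sum, ← Finset.add_sum_erase _ _ (Finset.mem_univ (∅ : Finset (PIdx d)))]
  simp only [mix_empty, Finset.card_empty, pow_zero, one_mul, add_sub_cancel_left]
  refine (norm_sum_le _ _).trans ?_
  unfold Phi
  refine le_add_of_le_of_nonneg (Finset.sum_le_sum fun I _ => ?_)
    (Finset.sum_nonneg fun I _ => mul_nonneg (by positivity) (bet_nonneg hT _))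
  rw [mv_smul, norm_smul, Real.norm_eq_abs, abs_of_pos (by positivity)]

lemma bet_le_Phi (hT : Adm T M) {ε : ℝ} (hε : 0 < ε) (z : Pt n m d)
    (G : PIdx d × Fin n → ℝ) :
    ε * bet T (Bm A fun k i => ε * G (k, i) + z.1 k i) ≤ Phi A T ε z G := by
  rw [Bm_scaled]
  unfold Phi
  refine le_add_of_nonneg_of_le (Finset.sum_nonneg fun I _ => by positivity) ?_
  refine (mul_le_mul_of_nonneg_left (bet_sum_le hT _ _) hε.le).trans ?_
  rw [Finset.mul_sum]
  refine Finset.sum_le_sum fun I _ => ?_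
  refine (mul_le_mul_of_nonneg_left (bet_smul_le hT _ _) hε.le).trans (le_of_eq ?_)
  rw [abs_of_pos (by positivity)]
  ring

/-- Volumetric bound for separated sets. Each point `z` of the set owns a subset of Gaussian space
of measure at least `exp (-d / (2 ε²)) / 2`, and by Sudakov's minoration a given `g` belongs to at
most `exp (256 / ε²)` of these subsets. -/
lemma packing_bound (hT : Adm T M) {ε Q : ℝ} (hε : 0 < ε) (S : Finset (Pt n m d))
    (hS : ∀ z ∈ S, z ∈ ballSet n m d T)
    (hmeas : ∀ z ∈ S, Measurable (Phi A T ε z))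
    (h_integ : ∀ z ∈ S, Integrable (Phi A T ε z) (_root_.stdGaussian (PIdx d × Fin n)))
    (hQ : ∀ z ∈ S, ∫ G, Phi A T ε z G ∂ _root_.stdGaussian (PIdx d × Fin n) ≤ Q)
    (hsep : ∀ z ∈ S, ∀ w ∈ S, z ≠ w → 6 * Q < rhoA A z w) :
    (S.card : ℝ) ≤ 2 * Real.exp ((256 + d / 2) * ε⁻¹ ^ 2) := by
  rcases S.eq_empty_or_nonempty with rfl | ⟨z0, hz0⟩
  · simp; positivity
  have hQ0 : 0 ≤ Q := (integral_nonneg fun G => Phi_nonneg A hT hε z0 G).trans (hQ z0 hz0)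
  set μ := _root_.stdGaussian (PIdx d × Fin n)
  set E : Pt n m d → Set (PIdx d × Fin n → ℝ) := fun z => {G | Phi A T ε z G ≤ 2 * Q}
  set a : Pt n m d → PIdx d × Fin n → ℝ := fun z q => ε⁻¹ * z.1 q.1 q.2
  have hEm : ∀ z ∈ S, MeasurableSet (E z) := fun z hz => hmeas z hz measurableSet_Iic
  have hFm : ∀ z ∈ S, MeasurableSet {g | g - a z ∈ E z} := fun z hz =>
    (measurable_id.sub_const (a z)) (hEm z hz)
  have hlow : ∀ z ∈ S, 1 / 2 * Real.exp (-(d / 2 * ε⁻¹ ^ 2)) ≤ μ.real {g | g - a z ∈ E z} := by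
    intro z hz
    refine le_trans ?_ (gauss_shift (a z) (E z) (hEm z hz)
      fun G hG => (Phi_neg_le A hT hε z G).trans hG)
    rw [mul_comm]
    refine mul_le_mul (Real.exp_le_exp.2 ?_)
      (markov_half μ (h_integ z hz) (Phi_nonneg A hT hε z) (hQ z hz) (hEm z hz))
      (by norm_num) (Real.exp_pos _).le
    have h1 : ∑ q, a z q ^ 2 ≤ d * ε⁻¹ ^ 2 := by
      simp only [a, mul_pow, Fintype.sum_prod_type, ← Finset.mul_sum]
      rw [mul_comm]
      refine mul_le_mul_of_nonneg_right ?_ (by positivity)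
      refine (Finset.sum_le_sum fun k _ => (hS z hz).1 k).trans (le_of_eq ?_)
      simp
    linarith
  have hmult : ∀ g, (((S.filter fun z => g - a z ∈ E z).card : ℕ) : ℝ)
      ≤ Real.exp (256 * ε⁻¹ ^ 2) := by
    intro g
    set R := S.filter fun z => g - a z ∈ E z
    set y : PIdx d → Fin n → ℝ := fun k i => ε * g (k, i) with hy
    have hyz : ∀ z : Pt n m d, (fun k i => ε * (g - a z) (k, i) + z.1 k i) = y := by
      intro z
      ext k i
      simp only [a, hy, Pi.sub_apply]
      field_simp
      ring
    have hd : ∀ z ∈ R, ‖mv (Bm A y) z.2 - mv (Bm A z.1) z.2‖ ≤ 2 * Q := by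
      intro z hz
      have h1 := dist_le_Phi A hT hε z (g - a z)
      rw [hyz] at h1
      exact h1.trans (Finset.mem_filter.1 hz).2
    have hRsep : ∀ z ∈ R, ∀ w ∈ R, z ≠ w → 2 * Q < ‖mv (Bm A y) z.2 - mv (Bm A y) w.2‖ := by
      intro z hz w hw hne
      have h1 := hsep z (Finset.mem_filter.1 hz).1 w (Finset.mem_filter.1 hw).1 hne
      rw [rhoA_eq] at h1
      have h2 := hd z hz
      have h3 := hd w hw
      have h4 : mv (Bm A w.1) w.2 - mv (Bm A z.1) z.2
          = (mv (Bm A y) z.2 - mv (Bm A z.1) z.2) - (mv (Bm A y) w.2 - mv (Bm A w.1) w.2)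
            - (mv (Bm A y) z.2 - mv (Bm A y) w.2) := by abel
      rw [h4] at h1
      have h5 := norm_sub_le
        ((mv (Bm A y) z.2 - mv (Bm A z.1) z.2) - (mv (Bm A y) w.2 - mv (Bm A w.1) w.2))
        (mv (Bm A y) z.2 - mv (Bm A y) w.2)
      have h6 := norm_sub_le (mv (Bm A y) z.2 - mv (Bm A z.1) z.2)
        (mv (Bm A y) w.2 - mv (Bm A w.1) w.2)
      linarith
    have hinj : Set.InjOn Prod.snd (R : Set (Pt n m d)) := by
      intro z hz w hw hzw
      by_contra hne
      have h1 := hRsep z hz w hw hne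
      rw [hzw, sub_self, norm_zero] at h1
      linarith
    rcases R.eq_empty_or_nonempty with hR | ⟨z1, hz1⟩
    · rw [hR]; simp; positivity
    rw [← Finset.card_image_of_injOn hinj]
    refine sudakov hT (Bm A y) (q := 2 * Q) (by positivity) hε ?_ _ ?_ ?_
    · have h1 := bet_le_Phi A hT hε z1 (g - a z1)
      rw [hyz] at h1
      exact h1.trans (Finset.mem_filter.1 hz1).2
    · intro t ht
      obtain ⟨z, hz, rfl⟩ := Finset.mem_image.1 ht
      exact (hS z (Finset.mem_filter.1 hz).1).2
    · intro t ht t' ht' hne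
      obtain ⟨z, hz, rfl⟩ := Finset.mem_image.1 ht
      obtain ⟨w, hw, rfl⟩ := Finset.mem_image.1 ht'
      exact hRsep z hz w hw fun h => hne (by rw [h])
  have hsum : ∑ z ∈ S, μ.real {g | g - a z ∈ E z} ≤ Real.exp (256 * ε⁻¹ ^ 2) := by
    have h1 : ∀ z ∈ S, μ.real {g | g - a z ∈ E z}
        = ∫ g, Set.indicator {g | g - a z ∈ E z} (fun _ => (1 : ℝ)) g ∂μ := by
      intro z hz
      rw [integral_indicator (hFm z hz)]
      simp
    have hi : ∀ z ∈ S, Integrable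
        (fun g => Set.indicator {g | g - a z ∈ E z} (fun _ => (1 : ℝ)) g) μ := fun z hz =>
      (integrable_const (1 : ℝ)).indicator (hFm z hz)
    rw [Finset.sum_congr rfl h1, ← integral_finsetSum _ hi]
    have h2 : ∫ g, (∑ z ∈ S, Set.indicator {g | g - a z ∈ E z} (fun _ => (1 : ℝ)) g) ∂μ
        ≤ ∫ _, Real.exp (256 * ε⁻¹ ^ 2) ∂μ := by
      refine integral_mono (integrable_finsetSum _ hi) (integrable_const _) fun g => ?_
      refine le_trans (le_of_eq ?_) (hmult g)
      simp [Set.indicator_apply]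
    simpa using h2
  have hcount : (S.card : ℝ) * (1 / 2 * Real.exp (-(d / 2 * ε⁻¹ ^ 2)))
      ≤ Real.exp (256 * ε⁻¹ ^ 2) := by
    refine le_trans (le_of_eq ?_) ((Finset.sum_le_sum hlow).trans hsum)
    simp
  rw [Real.exp_neg] at hcount
  rw [add_mul, Real.exp_add]
  have hpos := Real.exp_pos ((d : ℝ) / 2 * ε⁻¹ ^ 2)
  rw [← mul_assoc, ← div_eq_mul_inv, div_le_iff₀ hpos] at hcount
  linarith

end expansion

/-! ### The mixed norms as suprema of decoupled chaoses -/

section norms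
variable {n m d : ℕ} {T : Set (Fin m → ℝ)} {M : ℝ} (A : (Fin (d + 1) → Fin n) → Fin m → ℝ)

/-- The decoupled Gaussian chaos with block Gaussians for the blocks in `P'` and deterministic
weights `ψ`, maximised over `T`. -/
noncomputable def chF (T : Set (Fin m → ℝ)) (P' : Finset (Finset (Fin (d + 1))))
    (ψ : (Fin (d + 1) → Fin n) → ℝ) (ω : GIdx (d + 1) n → ℝ) : ℝ :=
  supp T fun j => ∑ i, ψ i * (∏ J ∈ P', ω ⟨J, fun l => i l.1⟩) * A i j

/-- The expectation of `chF`. -/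
noncomputable def chVal (T : Set (Fin m → ℝ)) (P' : Finset (Finset (Fin (d + 1))))
    (ψ : (Fin (d + 1) → Fin n) → ℝ) : ℝ :=
  ∫ ω, chF A T P' ψ ω ∂_root_.stdGaussian (GIdx (d + 1) n)

lemma chF_le (hT : Adm T M) (P' : Finset (Finset (Fin (d + 1))))
    {ψ : (Fin (d + 1) → Fin n) → ℝ} (hψ : ∀ i, |ψ i| ≤ 1) (ω : GIdx (d + 1) n → ℝ) :
    chF A T P' ψ ω ≤ (M * ∑ j, ∑ i, |A i j|) * Real.exp (P'.card * ∑ q, |ω q|) := by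
  refine (supp_le_bound hT _).trans ?_
  rw [mul_assoc]
  refine mul_le_mul_of_nonneg_left ?_ hT.2.2.1
  rw [Finset.sum_mul]
  refine Finset.sum_le_sum fun j _ => (Finset.abs_sum_le_sum_abs _ _).trans ?_
  rw [Finset.sum_mul]
  refine Finset.sum_le_sum fun i _ => ?_
  rw [abs_mul, abs_mul, mul_comm]
  refine mul_le_mul_of_nonneg_left ?_ (abs_nonneg _)
  have h1 : |∏ J ∈ P', ω ⟨J, fun l => i l.1⟩| ≤ Real.exp (P'.card * ∑ q, |ω q|) := by
    rw [Finset.abs_prod, Real.exp_nat_mul, ← Finset.prod_const]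
    exact Finset.prod_le_prod (fun _ _ => abs_nonneg _) fun J _ => abs_le_exp_sum ω _
  calc |ψ i| * _ ≤ 1 * Real.exp (P'.card * ∑ q, |ω q|) :=
        mul_le_mul (hψ i) h1 (abs_nonneg _) zero_le_one
    _ = _ := one_mul _

lemma chF_continuous (hT : Adm T M) (P' : Finset (Finset (Fin (d + 1))))
    (ψ : (Fin (d + 1) → Fin n) → ℝ) : Continuous (chF A T P' ψ) := by
  refine (supp_continuous hT).comp (continuous_pi fun j => ?_)
  fun_prop

lemma chF_nonneg (hT : Adm T M) (P' : Finset (Finset (Fin (d + 1))))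
    (ψ : (Fin (d + 1) → Fin n) → ℝ) (ω : GIdx (d + 1) n → ℝ) : 0 ≤ chF A T P' ψ ω :=
  supp_nonneg hT _

lemma chF_integrable (hT : Adm T M) (P' : Finset (Finset (Fin (d + 1))))
    {ψ : (Fin (d + 1) → Fin n) → ℝ} (hψ : ∀ i, |ψ i| ≤ 1) :
    Integrable (chF A T P' ψ) (_root_.stdGaussian (GIdx (d + 1) n)) := by
  refine gauss_integrable_of_le (chF_continuous A hT P' ψ).aestronglyMeasurable
    (M * ∑ j, ∑ i, |A i j|) P'.card fun ω => ?_
  rw [abs_of_nonneg (chF_nonneg A hT P' ψ ω)]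
  exact chF_le A hT P' hψ ω

lemma chVal_bounded (hT : Adm T M) (P' : Finset (Finset (Fin (d + 1)))) :
    ∃ K : ℝ, ∀ ψ : (Fin (d + 1) → Fin n) → ℝ, (∀ i, |ψ i| ≤ 1) → chVal A T P' ψ ≤ K := by
  refine ⟨∫ ω, (M * ∑ j, ∑ i, |A i j|) * Real.exp (P'.card * ∑ q, |ω q|)
    ∂_root_.stdGaussian (GIdx (d + 1) n), fun ψ hψ => ?_⟩
  exact integral_mono (chF_integrable A hT P' hψ) ((gauss_integrable_exp _).const_mul _)
    fun ω => chF_le A hT P' hψ ω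

lemma chVal_nonneg (hT : Adm T M) (P' : Finset (Finset (Fin (d + 1))))
    (ψ : (Fin (d + 1) → Fin n) → ℝ) : 0 ≤ chVal A T P' ψ :=
  integral_nonneg fun ω => chF_nonneg A hT P' ψ ω

lemma chaosNormT_eq (P' P : Finset (Finset (Fin (d + 1)))) :
    chaosNormT A T P' P = sSup {r : ℝ | ∃ x : (I : Finset (Fin (d + 1))) →
        ({l // l ∈ I} → Fin n) → ℝ,
      (∀ I ∈ P, ∑ v : {l // l ∈ I} → Fin n, x I v ^ 2 ≤ 1) ∧
      r = chVal A T P' fun i => ∏ I ∈ P, x I fun l => i l.1} := by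
  unfold chaosNormT chVal chF supp
  have key : ∀ (x : (I : Finset (Fin (d + 1))) → ({l // l ∈ I} → Fin n) → ℝ)
      (ω : GIdx (d + 1) n → ℝ) (t : Fin m → ℝ),
      ∑ i : Fin (d + 1) → Fin n, ∑ j : Fin m, (∏ I ∈ P, x I fun l => i l.1) *
        (∏ J ∈ P', ω ⟨J, fun l => i l.1⟩) * A i j * t j
      = ∑ j : Fin m, (∑ i : Fin (d + 1) → Fin n, (∏ I ∈ P, x I fun l => i l.1) *
        (∏ J ∈ P', ω ⟨J, fun l => i l.1⟩) * A i j) * t j := fun x ω t => by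
    simp only [Finset.sum_mul]
    exact Finset.sum_comm
  simp only [key]

lemma chaosNormTFix_eq (P' P : Finset (Finset (Fin (d + 1)))) (j0 : Fin (d + 1))
    (xj : Fin n → ℝ) :
    chaosNormTFix A T P' P j0 xj = sSup {r : ℝ | ∃ x : (I : Finset (Fin (d + 1))) →
        ({l // l ∈ I} → Fin n) → ℝ,
      (∀ I ∈ P, ∑ v : {l // l ∈ I} → Fin n, x I v ^ 2 ≤ 1) ∧
      r = chVal A T P' fun i => (∏ I ∈ P, x I fun l => i l.1) * xj (i j0)} := by
  unfold chaosNormTFix chVal chF supp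
  have key : ∀ (x : (I : Finset (Fin (d + 1))) → ({l // l ∈ I} → Fin n) → ℝ)
      (ω : GIdx (d + 1) n → ℝ) (t : Fin m → ℝ),
      ∑ i : Fin (d + 1) → Fin n, ∑ j : Fin m, (∏ I ∈ P, x I fun l => i l.1) * xj (i j0) *
        (∏ J ∈ P', ω ⟨J, fun l => i l.1⟩) * A i j * t j
      = ∑ j : Fin m, (∑ i : Fin (d + 1) → Fin n, (∏ I ∈ P, x I fun l => i l.1) * xj (i j0) *
        (∏ J ∈ P', ω ⟨J, fun l => i l.1⟩) * A i j) * t j := fun x ω t => by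
    simp only [Finset.sum_mul]
    exact Finset.sum_comm
  simp only [key]

lemma abs_le_one_of_sum_sq {ι : Type*} [Fintype ι] {f : ι → ℝ} (h : ∑ i, f i ^ 2 ≤ 1) (i : ι) :
    |f i| ≤ 1 := by
  rw [← sq_le_one_iff_abs_le_one]
  exact (Finset.single_le_sum (f := fun i => f i ^ 2) (fun _ _ => sq_nonneg _)
    (Finset.mem_univ i)).trans h

lemma abs_weight_le {P : Finset (Finset (Fin (d + 1)))}
    {x : (I : Finset (Fin (d + 1))) → ({l // l ∈ I} → Fin n) → ℝ}
    (hx : ∀ I ∈ P, ∑ v : {l // l ∈ I} → Fin n, x I v ^ 2 ≤ 1) (i : Fin (d + 1) → Fin n) :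
    |∏ I ∈ P, x I fun l => i l.1| ≤ 1 := by
  rw [Finset.abs_prod]
  exact Finset.prod_le_one (fun _ _ => abs_nonneg _) fun I hI => abs_le_one_of_sum_sq (hx I hI) _

lemma abs_weightFix_le {P : Finset (Finset (Fin (d + 1)))}
    {x : (I : Finset (Fin (d + 1))) → ({l // l ∈ I} → Fin n) → ℝ}
    (hx : ∀ I ∈ P, ∑ v : {l // l ∈ I} → Fin n, x I v ^ 2 ≤ 1) {xj : Fin n → ℝ}
    (hxj : ∑ i, xj i ^ 2 ≤ 1) (j0 : Fin (d + 1)) (i : Fin (d + 1) → Fin n) :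
    |(∏ I ∈ P, x I fun l => i l.1) * xj (i j0)| ≤ 1 := by
  rw [abs_mul]
  exact mul_le_one₀ (abs_weight_le hx i) (abs_nonneg _) (abs_le_one_of_sum_sq hxj _)

lemma le_chaosNormT (hT : Adm T M) (P' P : Finset (Finset (Fin (d + 1))))
    (x : (I : Finset (Fin (d + 1))) → ({l // l ∈ I} → Fin n) → ℝ)
    (hx : ∀ I ∈ P, ∑ v : {l // l ∈ I} → Fin n, x I v ^ 2 ≤ 1) :
    chVal A T P' (fun i => ∏ I ∈ P, x I fun l => i l.1) ≤ chaosNormT A T P' P := by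
  rw [chaosNormT_eq]
  obtain ⟨K, hK⟩ := chVal_bounded A hT P'
  refine le_csSup ⟨K, ?_⟩ ⟨x, hx, rfl⟩
  rintro r ⟨y, hy, rfl⟩
  exact hK _ (abs_weight_le hy)

lemma chaosNormT_nonneg (hT : Adm T M) (P' P : Finset (Finset (Fin (d + 1)))) :
    0 ≤ chaosNormT A T P' P := by
  rw [chaosNormT_eq]
  refine Real.sSup_nonneg ?_
  rintro r ⟨y, hy, rfl⟩
  exact chVal_nonneg A hT P' _

lemma le_chaosNormTFix (hT : Adm T M) (P' P : Finset (Finset (Fin (d + 1))))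
    (x : (I : Finset (Fin (d + 1))) → ({l // l ∈ I} → Fin n) → ℝ)
    (hx : ∀ I ∈ P, ∑ v : {l // l ∈ I} → Fin n, x I v ^ 2 ≤ 1) (j0 : Fin (d + 1))
    {xj : Fin n → ℝ} (hxj : ∑ i, xj i ^ 2 ≤ 1) :
    chVal A T P' (fun i => (∏ I ∈ P, x I fun l => i l.1) * xj (i j0))
      ≤ chaosNormTFix A T P' P j0 xj := by
  rw [chaosNormTFix_eq]
  obtain ⟨K, hK⟩ := chVal_bounded A hT P'
  refine le_csSup ⟨K, ?_⟩ ⟨x, hx, rfl⟩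
  rintro r ⟨y, hy, rfl⟩
  exact hK _ (abs_weightFix_le hy hxj j0)

lemma chaosNormTFix_nonneg (hT : Adm T M) (P' P : Finset (Finset (Fin (d + 1))))
    (j0 : Fin (d + 1)) (xj : Fin n → ℝ) : 0 ≤ chaosNormTFix A T P' P j0 xj := by
  rw [chaosNormTFix_eq]
  refine Real.sSup_nonneg ?_
  rintro r ⟨y, hy, rfl⟩
  exact chVal_nonneg A hT P' _

lemma chaosNormTFix_bounded (hT : Adm T M) (P' P : Finset (Finset (Fin (d + 1))))
    (j0 : Fin (d + 1)) :
    ∃ K : ℝ, ∀ xj : Fin n → ℝ, ∑ i, xj i ^ 2 ≤ 1 → chaosNormTFix A T P' P j0 xj ≤ K := by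
  obtain ⟨K, hK⟩ := chVal_bounded A hT P'
  refine ⟨K, fun xj hxj => ?_⟩
  rw [chaosNormTFix_eq]
  refine csSup_le ⟨_, fun _ _ => 0, fun _ _ => by simp, rfl⟩ ?_
  rintro r ⟨y, hy, rfl⟩
  exact hK _ (abs_weightFix_le hy hxj j0)

lemma sNorm_nonneg (hT : Adm T M) (k : ℕ) : 0 ≤ sNorm A T k :=
  Finset.sum_nonneg fun _ _ => chaosNormT_nonneg A hT _ _

lemma chaosNormT_le_sNorm (hT : Adm T M) {P' P : Finset (Finset (Fin (d + 1)))}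
    (h : IsPartitionPair Finset.univ P P') : chaosNormT A T P' P ≤ sNorm A T P.card := by
  unfold sNorm
  exact Finset.single_le_sum (f := fun PP : Finset (Finset (Fin (d + 1))) × _ =>
    chaosNormT A T PP.2 PP.1) (fun _ _ => chaosNormT_nonneg A hT _ _)
    (a := (P, P')) (by simp [h])

lemma hatAlpha_nonneg (hT : Adm T M) (x : PIdx d → Fin n → ℝ) : 0 ≤ hatAlpha A T x :=
  Finset.sum_nonneg fun _ _ => Finset.sum_nonneg fun _ _ => chaosNormTFix_nonneg A hT _ _ _ _

lemma hatAlphaSup_nonneg (hT : Adm T M) (U : Set (Pt n m d)) : 0 ≤ hatAlphaSup A T U := by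
  refine Real.sSup_nonneg ?_
  rintro r ⟨z, _, rfl⟩
  exact hatAlpha_nonneg A hT _

lemma hatAlpha_le_sup (hT : Adm T M) {U : Set (Pt n m d)} (hU : U ⊆ ballSet n m d T)
    {z : Pt n m d} (hz : z ∈ U) : hatAlpha A T z.1 ≤ hatAlphaSup A T U := by
  choose K hK using fun (P' P : Finset (Finset (Fin (d + 1)))) (j0 : Fin (d + 1)) =>
    chaosNormTFix_bounded A hT P' P j0
  refine le_csSup ⟨∑ j : PIdx d,
    ∑ PP ∈ Finset.univ.filter (fun PP :
        Finset (Finset (Fin (d + 1))) × Finset (Finset (Fin (d + 1))) =>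
        IsPartitionPair (Finset.univ.erase j.1) PP.1 PP.2 ∧ PP.1.card = d - 1),
      K PP.2 PP.1 j.1, ?_⟩ ⟨z, hz, rfl⟩
  rintro r ⟨w, hw, rfl⟩
  exact Finset.sum_le_sum fun j _ => Finset.sum_le_sum fun PP _ => hK _ _ _ _ ((hU hw).1 j)

lemma chaosNormTFix_le_sup (hT : Adm T M) {U : Set (Pt n m d)} (hU : U ⊆ ballSet n m d T)
    {z : Pt n m d} (hz : z ∈ U) (j : PIdx d) {P' P : Finset (Finset (Fin (d + 1)))}
    (h : IsPartitionPair (Finset.univ.erase j.1) P P') (hc : P.card = d - 1) :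
    chaosNormTFix A T P' P j.1 (z.1 j) ≤ hatAlphaSup A T U := by
  refine le_trans ?_ (hatAlpha_le_sup A hT hU hz)
  have h1 := Finset.single_le_sum (f := fun PP : Finset (Finset (Fin (d + 1))) × _ =>
    chaosNormTFix A T PP.2 PP.1 j.1 (z.1 j)) (fun _ _ => chaosNormTFix_nonneg A hT _ _ _ _)
    (a := (P, P')) (s := Finset.univ.filter (fun PP :
        Finset (Finset (Fin (d + 1))) × Finset (Finset (Fin (d + 1))) =>
        IsPartitionPair (Finset.univ.erase j.1) PP.1 PP.2 ∧ PP.1.card = d - 1)) (by simp [h, hc])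
  refine h1.trans ?_
  unfold hatAlpha
  exact Finset.single_le_sum (f := fun j : PIdx d => ∑ PP ∈ Finset.univ.filter (fun PP :
        Finset (Finset (Fin (d + 1))) × Finset (Finset (Fin (d + 1))) =>
        IsPartitionPair (Finset.univ.erase j.1) PP.1 PP.2 ∧ PP.1.card = d - 1),
      chaosNormTFix A T PP.2 PP.1 j.1 (z.1 j))
    (fun _ _ => Finset.sum_nonneg fun _ _ => chaosNormTFix_nonneg A hT _ _ _ _)
    (Finset.mem_univ j)

/-- The covering diameter of the entropy bound. -/
noncomputable def Dbd (T : Set (Fin m → ℝ)) (U : Set (Pt n m d)) (ε : ℝ) : ℝ :=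
  (∑ k ∈ Finset.range d, ε ^ (d + 1 - k) * sNorm A T k) + ε * hatAlphaSup A T U

lemma chaosNormT_le_Dbd (hT : Adm T M) (U : Set (Pt n m d)) {ε : ℝ} (hε : 0 < ε)
    {P' P : Finset (Finset (Fin (d + 1)))} (h : IsPartitionPair Finset.univ P P')
    {k : ℕ} (hk : P.card + k = d + 1) (hk2 : 2 ≤ k) :
    ε ^ k * chaosNormT A T P' P ≤ Dbd A T U ε := by
  have h1 : ε ^ (d + 1 - P.card) * sNorm A T P.card
      ≤ ∑ k ∈ Finset.range d, ε ^ (d + 1 - k) * sNorm A T k :=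
    Finset.single_le_sum (f := fun k => ε ^ (d + 1 - k) * sNorm A T k)
      (fun k _ => mul_nonneg (pow_nonneg hε.le _) (sNorm_nonneg A hT k))
      (Finset.mem_range.2 (by omega))
  have h2 : d + 1 - P.card = k := by omega
  rw [h2] at h1
  have h3 := mul_le_mul_of_nonneg_left (chaosNormT_le_sNorm A hT h) (pow_nonneg hε.le k)
  have h4 := mul_nonneg hε.le (hatAlphaSup_nonneg A hT U)
  unfold Dbd
  linarith

lemma hatAlphaSup_le_Dbd (hT : Adm T M) (U : Set (Pt n m d)) {ε : ℝ} (hε : 0 < ε) :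
    ε * hatAlphaSup A T U ≤ Dbd A T U ε := by
  have : 0 ≤ ∑ k ∈ Finset.range d, ε ^ (d + 1 - k) * sNorm A T k :=
    Finset.sum_nonneg fun k _ => mul_nonneg (pow_nonneg hε.le _) (sNorm_nonneg A hT k)
  unfold Dbd
  linarith

lemma Dbd_nonneg (hT : Adm T M) (U : Set (Pt n m d)) {ε : ℝ} (hε : 0 < ε) :
    0 ≤ Dbd A T U ε :=
  (mul_nonneg hε.le (hatAlphaSup_nonneg A hT U)).trans (hatAlphaSup_le_Dbd A hT U hε)

end norms

/-! ### Partitions with one distinguished block and singletons -/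

section blocks
variable {n d : ℕ}

/-- The family of singletons `{k}`, `k ∈ K`. -/
def sing (K : Finset (PIdx d)) : Finset (Finset (Fin (d + 1))) :=
  K.image fun k => {k.1}

lemma sing_inj : Function.Injective (fun k : PIdx d => ({k.1} : Finset (Fin (d + 1)))) := by
  intro a b h
  exact Subtype.ext (Finset.singleton_inj.1 h)

lemma card_sing (K : Finset (PIdx d)) : (sing K).card = K.card :=
  Finset.card_image_of_injective _ sing_inj

lemma prod_sing (K : Finset (PIdx d)) (f : Finset (Fin (d + 1)) → ℝ) :
    ∏ J ∈ sing K, f J = ∏ k ∈ K, f {k.1} :=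
  Finset.prod_image fun _ _ _ _ h => sing_inj h

lemma notMem_sing {J0 : Finset (Fin (d + 1))} (h0 : 0 ∈ J0) (K : Finset (PIdx d)) :
    J0 ∉ sing K := by
  intro h
  obtain ⟨k, -, rfl⟩ := Finset.mem_image.1 h
  exact k.2 (Finset.mem_singleton.1 h0).symm

lemma isPartition_insert {J0 : Finset (Fin (d + 1))} (h0 : 0 ∈ J0) {K : Finset (PIdx d)}
    (hK : ∀ k ∈ K, k.1 ∉ J0) {S : Finset (Fin (d + 1))}
    (hS : ∀ l, l ∈ S ↔ l ∈ J0 ∨ ∃ h : l ≠ 0, ⟨l, h⟩ ∈ K) :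
    IsPartition S (insert J0 (sing K)) := by
  have hsing : ∀ J ∈ sing K, ∃ k ∈ K, J = {k.1} := fun J hJ => by
    obtain ⟨k, hk, rfl⟩ := Finset.mem_image.1 hJ
    exact ⟨k, hk, rfl⟩
  refine ⟨?_, ?_, ?_⟩
  · intro J hJ
    rcases Finset.mem_insert.1 hJ with rfl | hJ
    · exact ⟨0, h0⟩
    · obtain ⟨k, hk, rfl⟩ := hsing J hJ
      exact Finset.singleton_nonempty _
  · intro J hJ J' hJ' hne
    rcases Finset.mem_insert.1 hJ with h | hJ <;> rcases Finset.mem_insert.1 hJ' with h' | hJ'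
    · exact absurd (h.trans h'.symm) hne
    · obtain ⟨k, hk, rfl⟩ := hsing J' hJ'
      rw [h]
      exact Finset.disjoint_singleton_right.2 (hK k hk)
    · obtain ⟨k, hk, rfl⟩ := hsing J hJ
      rw [h']
      exact Finset.disjoint_singleton_left.2 (hK k hk)
    · obtain ⟨k, hk, rfl⟩ := hsing J hJ
      obtain ⟨k', hk', rfl⟩ := hsing J' hJ'
      rw [Finset.disjoint_singleton]
      exact fun h => hne (by rw [h])
  · ext l
    rw [hS, Finset.sup_insert]
    simp only [id, Finset.sup_eq_union, Finset.mem_union, Finset.mem_sup]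
    refine or_congr Iff.rfl ⟨?_, ?_⟩
    · rintro ⟨J, hJ, hl⟩
      obtain ⟨k, hk, rfl⟩ := hsing J hJ
      obtain rfl := Finset.mem_singleton.1 hl
      exact ⟨k.2, hk⟩
    · rintro ⟨h, hl⟩
      exact ⟨{l}, Finset.mem_image.2 ⟨⟨l, h⟩, hl, rfl⟩, Finset.mem_singleton_self l⟩

lemma isPartitionPair_det {J0 : Finset (Fin (d + 1))} (h0 : 0 ∈ J0) {K : Finset (PIdx d)}
    (hK : ∀ k ∈ K, k.1 ∉ J0) {S : Finset (Fin (d + 1))}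
    (hS : ∀ l, l ∈ S ↔ l ∈ J0 ∨ ∃ h : l ≠ 0, ⟨l, h⟩ ∈ K) :
    IsPartitionPair S (insert J0 (sing K)) ∅ :=
  ⟨Finset.disjoint_empty_right _, by rw [Finset.union_empty]; exact isPartition_insert h0 hK hS⟩

lemma isPartitionPair_gauss {I K : Finset (PIdx d)} (hIK : Disjoint I K)
    {S : Finset (Fin (d + 1))}
    (hS : ∀ l, l ∈ S ↔ l = 0 ∨ ∃ h : l ≠ 0, ⟨l, h⟩ ∈ I ∪ K) :
    IsPartitionPair S (sing K) (insert {0} (sing I)) := by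
  refine ⟨?_, ?_⟩
  · rw [Finset.disjoint_insert_right]
    refine ⟨notMem_sing (Finset.mem_singleton_self 0) K, ?_⟩
    rw [sing, sing, Finset.disjoint_image sing_inj]
    exact hIK.symm
  · have : sing K ∪ insert {0} (sing I) = insert {0} (sing (I ∪ K)) := by
      rw [Finset.union_insert, sing, sing, sing, Finset.image_union, Finset.union_comm]
    rw [this]
    refine isPartition_insert (Finset.mem_singleton_self 0) (fun k _ => ?_) (fun l => ?_)
    · simpa using k.2
    · rw [hS, Finset.mem_singleton]

/-- The elementary tensors `v ↦ ∏ₗ x l (v l)` (with the convention `x 0 = 0`), used as test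
arrays on the singleton blocks. -/
noncomputable def xt (x : PIdx d → Fin n → ℝ) (J : Finset (Fin (d + 1)))
    (v : {l // l ∈ J} → Fin n) : ℝ :=
  ∏ l : {l // l ∈ J}, if h : l.1 ≠ 0 then x ⟨l.1, h⟩ (v l) else 0

lemma xt_sum_sq {x : PIdx d → Fin n → ℝ} (hx : ∀ k, ∑ i, x k i ^ 2 ≤ 1)
    (J : Finset (Fin (d + 1))) : ∑ v : {l // l ∈ J} → Fin n, xt x J v ^ 2 ≤ 1 := by
  have h1 : ∑ v : {l // l ∈ J} → Fin n, xt x J v ^ 2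
      = ∏ l : {l // l ∈ J}, ∑ i : Fin n, (if h : l.1 ≠ 0 then x ⟨l.1, h⟩ i else 0) ^ 2 := by
    rw [Finset.prod_univ_sum, Fintype.piFinset_univ]
    exact Finset.sum_congr rfl fun v _ => by rw [xt, Finset.prod_pow]
  rw [h1]
  refine Finset.prod_le_one (fun l _ => Finset.sum_nonneg fun i _ => sq_nonneg _) fun l _ => ?_
  by_cases h : l.1 ≠ 0
  · simpa only [dif_pos h] using hx ⟨l.1, h⟩
  · simp [h]

lemma xt_single (x : PIdx d → Fin n → ℝ) (k : PIdx d) (i : Fin (d + 1) → Fin n) :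
    (xt x {k.1} fun l => i l.1) = x k (i k.1) := by
  unfold xt
  rw [Finset.prod_coe_sort {k.1} (fun l => if h : l ≠ 0 then x ⟨l, h⟩ (i l) else 0),
    Finset.prod_singleton, dif_pos k.2]

end blocks

/-! ### Expected Gaussian widths of the mixed contractions -/

instance stdGaussian_sFinite (ι : Type*) [Fintype ι] : SFinite (_root_.stdGaussian ι) := by
  have := stdGaussian_isProb ι
  infer_instance

section beta
variable {n m d : ℕ} {T : Set (Fin m → ℝ)} {M : ℝ} (A : (Fin (d + 1) → Fin n) → Fin m → ℝ)

/-- Splitting a multi-index into its coordinate `0` and the others. -/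
def ext0Equiv (n d : ℕ) : Fin n × (PIdx d → Fin n) ≃ (Fin (d + 1) → Fin n) where
  toFun p := ext0 p.1 p.2
  invFun i := (i 0, fun k => i k.1)
  left_inv p := by
    refine Prod.ext ?_ (funext fun k => ?_)
    · simp [ext0]
    · simp [ext0, k.2]
  right_inv i := by
    funext l
    by_cases h : l = 0
    · simp [ext0, h]
    · simp [ext0, h]

lemma sum_ext0 (F : (Fin (d + 1) → Fin n) → ℝ) :
    ∑ i, F i = ∑ i1, ∑ i' : PIdx d → Fin n, F (ext0 i1 i') := by
  rw [← (ext0Equiv n d).sum_comp, Fintype.sum_prod_type]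
  rfl

lemma ext0_zero (i1 : Fin n) (i' : PIdx d → Fin n) : ext0 i1 i' 0 = i1 := by simp [ext0]

lemma ext0_pos (i1 : Fin n) (i' : PIdx d → Fin n) (k : PIdx d) : ext0 i1 i' k.1 = i' k := by
  simp [ext0, k.2]

/-- The position, among all block Gaussians, of the Gaussian vectors attached to the singleton
blocks. -/
def embG (n d : ℕ) : (PIdx d × Fin n) ⊕ Fin n → GIdx (d + 1) n
  | Sum.inl q => ⟨{q.1.1}, fun _ => q.2⟩
  | Sum.inr i => ⟨{0}, fun _ => i⟩

lemma embG_inj : Function.Injective (embG n d) := by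
  have aux : ∀ (a b : Fin (d + 1)) (i j : Fin n),
      (⟨{a}, fun _ => i⟩ : GIdx (d + 1) n) = ⟨{b}, fun _ => j⟩ → a = b ∧ i = j := by
    intro a b i j h
    have h1 : a = b := Finset.singleton_inj.1 (congrArg Sigma.fst h)
    subst h1
    refine ⟨rfl, ?_⟩
    have h2 := eq_of_heq (Sigma.mk.inj h).2
    exact congrFun h2 ⟨a, Finset.mem_singleton_self a⟩
  rintro (⟨k, i⟩ | i) (⟨k', i'⟩ | i') h
  · obtain ⟨h1, h2⟩ := aux _ _ _ _ h
    obtain rfl : k = k' := Subtype.ext h1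
    obtain rfl : i = i' := h2
    rfl
  · exact absurd (aux _ _ _ _ h).1 k.2
  · exact absurd (aux _ _ _ _ h).1.symm k'.2
  · rw [(aux _ _ _ _ h).2]

/-- Restriction of the block Gaussians to the singleton blocks. -/
def splitG (n d : ℕ) (ω : GIdx (d + 1) n → ℝ) : (PIdx d × Fin n → ℝ) × (Fin n → ℝ) :=
  (fun q => ω (embG n d (Sum.inl q)), fun i => ω (embG n d (Sum.inr i)))

lemma splitG_measurable : Measurable (splitG n d) := by
  unfold splitG
  fun_prop

lemma splitG_map : (_root_.stdGaussian (GIdx (d + 1) n)).map (splitG n d)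
    = (_root_.stdGaussian (PIdx d × Fin n)).prod (_root_.stdGaussian (Fin n)) := by
  rw [← gauss_map_sum, ← gauss_map_inj (embG n d) embG_inj, Measure.map_map]
  · rfl
  · fun_prop
  · fun_prop

lemma omega_single (ω : GIdx (d + 1) n → ℝ) (a : Fin (d + 1)) (i : Fin (d + 1) → Fin n) :
    ω ⟨{a}, fun l => i l.1⟩ = ω ⟨{a}, fun _ => i a⟩ := by
  congr 2
  funext l
  rw [Finset.mem_singleton.1 l.2]

/-- The deterministic weights `∏ x k`, `k ∉ I`. -/
noncomputable def wt (x : PIdx d → Fin n → ℝ) (I : Finset (PIdx d)) (i : Fin (d + 1) → Fin n) : ℝ :=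
  ∏ k ∈ Iᶜ, x k (i k.1)

lemma abs_wt_le {x : PIdx d → Fin n → ℝ} (hx : ∀ k, ∑ i, x k i ^ 2 ≤ 1) (I : Finset (PIdx d))
    (i : Fin (d + 1) → Fin n) : |wt x I i| ≤ 1 := by
  rw [wt, Finset.abs_prod]
  exact Finset.prod_le_one (fun _ _ => abs_nonneg _) fun k _ => abs_le_one_of_sum_sq (hx k) _

/-- The linear chaos in `g` with random matrix `Bm A (mix I G x)`, maximised over `T`. -/
noncomputable def mixF (T : Set (Fin m → ℝ)) (I : Finset (PIdx d)) (x : PIdx d → Fin n → ℝ)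
    (p : (PIdx d × Fin n → ℝ) × (Fin n → ℝ)) : ℝ :=
  supp T fun j => ∑ i, p.2 i * Bm A (mix I p.1 x) i j

lemma Bm_mix_continuous (I : Finset (PIdx d)) (x : PIdx d → Fin n → ℝ) (i : Fin n) (j : Fin m) :
    Continuous fun G => Bm A (mix I G x) i j := by
  simp only [Bm, prod_mix]
  fun_prop

lemma mixF_continuous (hT : Adm T M) (I : Finset (PIdx d)) (x : PIdx d → Fin n → ℝ) :
    Continuous (mixF A T I x) := by
  refine (supp_continuous hT).comp (continuous_pi fun j => ?_)
  refine continuous_finsetSum _ fun i _ => Continuous.mul (by fun_prop) ?_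
  exact (Bm_mix_continuous A I x i j).comp continuous_fst

lemma chF_eq_mixF (I : Finset (PIdx d)) (x : PIdx d → Fin n → ℝ) (ω : GIdx (d + 1) n → ℝ) :
    chF A T (insert {0} (sing I)) (wt x I) ω = mixF A T I x (splitG n d ω) := by
  unfold chF mixF
  congr 1
  funext j
  rw [sum_ext0]
  refine Finset.sum_congr rfl fun i1 _ => ?_
  rw [Bm, Finset.mul_sum]
  refine Finset.sum_congr rfl fun i' _ => ?_
  rw [Finset.prod_insert (notMem_sing (Finset.mem_singleton_self 0) I),
    prod_sing I (fun J => ω ⟨J, fun l => ext0 i1 i' l.1⟩), prod_mix, wt]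
  simp only [omega_single, ext0_zero, ext0_pos, splitG, embG]
  ring

lemma mixF_integrable (hT : Adm T M) (I : Finset (PIdx d)) {x : PIdx d → Fin n → ℝ}
    (hx : ∀ k, ∑ i, x k i ^ 2 ≤ 1) :
    Integrable (mixF A T I x)
      ((_root_.stdGaussian (PIdx d × Fin n)).prod (_root_.stdGaussian (Fin n))) := by
  rw [← splitG_map, integrable_map_measure
    (mixF_continuous A hT I x).aestronglyMeasurable splitG_measurable.aemeasurable]
  refine (chF_integrable A hT (insert {0} (sing I)) (abs_wt_le hx I)).congr ?_
  exact Filter.Eventually.of_forall fun ω => chF_eq_mixF A I x ω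

lemma bet_mix_measurable (hT : Adm T M) (I : Finset (PIdx d)) (x : PIdx d → Fin n → ℝ) :
    Measurable fun G => bet T (Bm A (mix I G x)) :=
  ((mixF_continuous A hT I x).stronglyMeasurable.integral_prod_right').measurable

lemma bet_mix_integrable (hT : Adm T M) (I : Finset (PIdx d)) {x : PIdx d → Fin n → ℝ}
    (hx : ∀ k, ∑ i, x k i ^ 2 ≤ 1) :
    Integrable (fun G => bet T (Bm A (mix I G x))) (_root_.stdGaussian (PIdx d × Fin n)) :=
  (mixF_integrable A hT I hx).integral_prod_left

lemma bet_mix_integral (hT : Adm T M) (I : Finset (PIdx d)) {x : PIdx d → Fin n → ℝ}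
    (hx : ∀ k, ∑ i, x k i ^ 2 ≤ 1) :
    ∫ G, bet T (Bm A (mix I G x)) ∂_root_.stdGaussian (PIdx d × Fin n)
      = chVal A T (insert {0} (sing I)) (wt x I) := by
  have h1 := integral_prod (mixF A T I x) (mixF_integrable A hT I hx)
  unfold chVal
  simp only [chF_eq_mixF]
  rw [← integral_map splitG_measurable.aemeasurable
    (mixF_continuous A hT I x).aestronglyMeasurable, splitG_map]
  exact h1.symm

lemma card_PIdx : Fintype.card (PIdx d) = d := by
  simp [PIdx, Fintype.card_subtype_compl]

lemma wt_eq (x : PIdx d → Fin n → ℝ) (I : Finset (PIdx d)) (i : Fin (d + 1) → Fin n) :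
    wt x I i = ∏ J ∈ sing Iᶜ, xt x J fun l => i l.1 := by
  rw [prod_sing Iᶜ (fun J => xt x J fun l => i l.1), wt]
  simp only [xt_single]

/-- The width terms of `Phi` with `I ≠ ∅`: all blocks are singletons, those of `I` and `{0}` being
Gaussian. -/
lemma beta_le (hT : Adm T M) (U : Set (Pt n m d)) {ε : ℝ} (hε : 0 < ε) {I : Finset (PIdx d)}
    (hI : I ≠ ∅) {x : PIdx d → Fin n → ℝ} (hx : ∀ k, ∑ i, x k i ^ 2 ≤ 1) :
    ε ^ (I.card + 1) * ∫ G, bet T (Bm A (mix I G x)) ∂_root_.stdGaussian (PIdx d × Fin n)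
      ≤ Dbd A T U ε := by
  rw [bet_mix_integral A hT I hx]
  have h1 := le_chaosNormT A hT (insert {0} (sing I)) (sing Iᶜ) (xt x) fun J _ => xt_sum_sq hx J
  simp only [← wt_eq] at h1
  refine (mul_le_mul_of_nonneg_left h1 (pow_nonneg hε.le _)).trans ?_
  have h2 : I.card ≤ d := by
    have := Finset.card_le_univ I
    rwa [card_PIdx] at this
  refine chaosNormT_le_Dbd A hT U hε (isPartitionPair_gauss disjoint_compl_right fun l => ?_) ?_ ?_
  · simp only [Finset.mem_univ, Finset.union_compl, true_iff]
    by_cases h : l = 0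
    · exact Or.inl h
    · exact Or.inr ⟨h, trivial⟩
  · rw [card_sing, Finset.card_compl, card_PIdx]
    omega
  · have := Finset.card_pos.2 (Finset.nonempty_iff_ne_empty.2 hI)
    omega

lemma wt_erase (x : PIdx d → Fin n → ℝ) {I : Finset (PIdx d)} {j : PIdx d} (hj : j ∉ I)
    (i : Fin (d + 1) → Fin n) :
    wt x I i = (∏ J ∈ sing (Iᶜ.erase j), xt x J fun l => i l.1) * x j (i j.1) := by
  rw [prod_sing _ (fun J => xt x J fun l => i l.1), wt]
  simp only [xt_single]
  exact (Finset.prod_erase_mul _ _ (Finset.mem_compl.2 hj)).symm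

/-- Without Gaussian coordinates the width is bounded by a summand of `hatAlpha`, whichever
coordinate is contracted. -/
lemma bet_le_hatAlphaSup (hT : Adm T M) (hd : 1 ≤ d) {U : Set (Pt n m d)}
    (hU : U ⊆ ballSet n m d T) {z : Pt n m d} (hz : z ∈ U) :
    bet T (Bm A z.1) ≤ hatAlphaSup A T U := by
  have hx := (hU hz).1
  have h1 := bet_mix_integral A hT ∅ hx
  simp only [mix_empty, integral_const, probReal_univ, one_smul] at h1
  rw [h1]
  let j : PIdx d := ⟨⟨1, by omega⟩, by simp [Fin.ext_iff]⟩
  have h2 := le_chaosNormTFix A hT (insert {0} (sing ∅)) (sing ((∅ : Finset (PIdx d))ᶜ.erase j))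
    (xt z.1) (fun J _ => xt_sum_sq hx J) j.1 (hx j)
  simp only [← wt_erase z.1 (Finset.notMem_empty j)] at h2
  refine h2.trans (chaosNormTFix_le_sup A hT hU hz j
    (isPartitionPair_gauss (Finset.disjoint_empty_left _) fun l => ?_) ?_)
  · simp only [Finset.mem_erase, Finset.mem_univ, and_true, Finset.empty_union, Finset.compl_empty]
    constructor
    · intro h
      by_cases h0 : l = 0
      · exact Or.inl h0
      · exact Or.inr ⟨h0, fun h' => h (congrArg Subtype.val h')⟩
    · rintro (rfl | ⟨h0, h'⟩)
      · exact j.2.symm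
      · exact fun h => h' (Subtype.ext h)
  · rw [card_sing, Finset.card_erase_of_mem (by simp), Finset.card_compl, card_PIdx]
    simp

end beta

/-! ### Expected norms of the mixed contractions -/

section alpha
variable {n m d : ℕ} {T : Set (Fin m → ℝ)} {M : ℝ} (A : (Fin (d + 1) → Fin n) → Fin m → ℝ)

/-- The marginal of the array `w` on the coordinates from `J`. -/
noncomputable def fib (w : (Fin (d + 1) → Fin n) → ℝ) (J : Finset (Fin (d + 1)))
    (v : {l // l ∈ J} → Fin n) : ℝ :=
  ∑ i, if (fun l : {l // l ∈ J} => i l.1) = v then w i else 0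

/-- The `ℓ₂`-norm of the marginal `fib`. -/
noncomputable def fibN (w : (Fin (d + 1) → Fin n) → ℝ) (J : Finset (Fin (d + 1))) : ℝ :=
  Real.sqrt (∑ v : {l // l ∈ J} → Fin n, fib w J v ^ 2)

lemma fib_sum (w : (Fin (d + 1) → Fin n) → ℝ) (J : Finset (Fin (d + 1)))
    (F : ({l // l ∈ J} → Fin n) → ℝ) :
    ∑ v, F v * fib w J v = ∑ i, F (fun l => i l.1) * w i := by
  simp only [fib, Finset.mul_sum, mul_ite, mul_zero]
  rw [Finset.sum_comm]
  simp

lemma fibN_sq (w : (Fin (d + 1) → Fin n) → ℝ) (J : Finset (Fin (d + 1))) :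
    fibN w J ^ 2 = ∑ v : {l // l ∈ J} → Fin n, fib w J v ^ 2 :=
  Real.sq_sqrt (Finset.sum_nonneg fun _ _ => sq_nonneg _)

lemma fibN_dual (w : (Fin (d + 1) → Fin n) → ℝ) (J : Finset (Fin (d + 1))) :
    ∑ i, ((fibN w J)⁻¹ * fib w J fun l => i l.1) * w i = fibN w J := by
  rw [← fib_sum w J fun v => (fibN w J)⁻¹ * fib w J v]
  have : ∑ v, (fibN w J)⁻¹ * fib w J v * fib w J v = (fibN w J)⁻¹ * fibN w J ^ 2 := by
    rw [fibN_sq, Finset.mul_sum]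
    exact Finset.sum_congr rfl fun v _ => by ring
  rw [this]
  by_cases h : fibN w J = 0
  · simp [h]
  · field_simp

lemma fib_normalized (w : (Fin (d + 1) → Fin n) → ℝ) (J : Finset (Fin (d + 1))) :
    ∑ v, ((fibN w J)⁻¹ * fib w J v) ^ 2 ≤ 1 := by
  simp only [mul_pow]
  rw [← Finset.mul_sum, ← fibN_sq, ← mul_pow]
  by_cases h : fibN w J = 0
  · simp [h]
  · simp [inv_mul_cancel₀ h]

/-- The array obtained from `A` by contracting the last coordinate with `t` and inserting the
weights `x k`, `k ∉ I`. -/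
noncomputable def wA (I : Finset (PIdx d)) (x : PIdx d → Fin n → ℝ) (t : Fin m → ℝ)
    (i : Fin (d + 1) → Fin n) : ℝ :=
  wt x I i * ∑ j, A i j * t j

/-- The coordinate `0` together with the coordinates from `I`. -/
def blk (I : Finset (PIdx d)) : Finset (Fin (d + 1)) := insert 0 (I.image Subtype.val)

lemma mem_blk {I : Finset (PIdx d)} {l : Fin (d + 1)} :
    l ∈ blk I ↔ l = 0 ∨ ∃ h : l ≠ 0, ⟨l, h⟩ ∈ I := by
  simp [blk]

lemma mem_blk_val {I : Finset (PIdx d)} {k : PIdx d} : k.1 ∈ blk I ↔ k ∈ I := by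
  rw [mem_blk]
  exact ⟨fun h => h.elim (fun h => absurd h k.2) fun ⟨_, h⟩ => h, fun h => Or.inr ⟨k.2, h⟩⟩

lemma zero_mem_blk (I : Finset (PIdx d)) : 0 ∈ blk I := mem_blk.2 (Or.inl rfl)

/-- The test array: the normalised marginal on the block `J0`, elementary tensors elsewhere. -/
noncomputable def yt (x : PIdx d → Fin n → ℝ) (w : (Fin (d + 1) → Fin n) → ℝ)
    (J0 J : Finset (Fin (d + 1))) (v : {l // l ∈ J} → Fin n) : ℝ :=
  if J = J0 then (fibN w J)⁻¹ * fib w J v else xt x J v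

lemma yt_sum_sq {x : PIdx d → Fin n → ℝ} (hx : ∀ k, ∑ i, x k i ^ 2 ≤ 1)
    (w : (Fin (d + 1) → Fin n) → ℝ) (J0 J : Finset (Fin (d + 1))) :
    ∑ v : {l // l ∈ J} → Fin n, yt x w J0 J v ^ 2 ≤ 1 := by
  by_cases h : J = J0
  · simpa only [yt, if_pos h] using fib_normalized w J
  · simpa only [yt, if_neg h] using xt_sum_sq hx J

lemma prod_yt (x : PIdx d → Fin n → ℝ) (w : (Fin (d + 1) → Fin n) → ℝ)
    {J0 : Finset (Fin (d + 1))} (h0 : 0 ∈ J0) (K : Finset (PIdx d)) (i : Fin (d + 1) → Fin n) :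
    (∏ J ∈ insert J0 (sing K), yt x w J0 J fun l => i l.1)
      = ((fibN w J0)⁻¹ * fib w J0 fun l => i l.1) * ∏ J ∈ sing K, xt x J fun l => i l.1 := by
  rw [Finset.prod_insert (notMem_sing h0 K)]
  congr 1
  · simp [yt]
  · refine Finset.prod_congr rfl fun J hJ => ?_
    have : J ≠ J0 := fun h => notMem_sing h0 K (h ▸ hJ)
    simp [yt, this]

lemma fibN_le_chVal (hT : Adm T M) (I : Finset (PIdx d)) (x : PIdx d → Fin n → ℝ)
    {t : Fin m → ℝ} (ht : t ∈ T) (J : Finset (Fin (d + 1))) :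
    fibN (wA A I x t) J ≤ chVal A T ∅ fun i =>
      ((fibN (wA A I x t) J)⁻¹ * fib (wA A I x t) J fun l => i l.1) * wt x I i := by
  set ψ : (Fin (d + 1) → Fin n) → ℝ := fun i =>
      ((fibN (wA A I x t) J)⁻¹ * fib (wA A I x t) J fun l => i l.1) * wt x I i
  have h1 : ∀ ω, chF A T ∅ ψ ω = supp T fun j => ∑ i, ψ i * A i j := fun ω => by simp [chF]
  have h2 : chVal A T ∅ ψ = supp T fun j => ∑ i, ψ i * A i j := by
    unfold chVal
    simp only [h1, integral_const, probReal_univ, one_smul]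
  rw [h2]
  refine le_trans (le_of_eq ?_) (le_supp hT _ ht)
  refine (fibN_dual (wA A I x t) J).symm.trans ?_
  simp only [wA, Finset.sum_mul, Finset.mul_sum]
  rw [Finset.sum_comm]
  exact Finset.sum_congr rfl fun j _ => Finset.sum_congr rfl fun i _ => by
    simp only [ψ]; ring

/-- The norm terms of `Phi`: for `2 ≤ |I|` the block `{0} ∪ I` and the singletons outside it form a
partition contributing to `sNorm`; for `|I| = 1` one further coordinate is contracted against `z`
and the partition contributes to `hatAlpha`. -/
lemma fibN_le_Dbd (hT : Adm T M) (hd : 2 ≤ d) {U : Set (Pt n m d)} (hU : U ⊆ ballSet n m d T)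
    {z : Pt n m d} (hz : z ∈ U) {ε : ℝ} (hε : 0 < ε) {I : Finset (PIdx d)} (hI : I ≠ ∅) :
    ε ^ I.card * fibN (wA A I z.1 z.2) (blk I) ≤ Dbd A T U ε := by
  have hx := (hU hz).1
  have ht := (hU hz).2
  have hc : I.card ≤ d := by
    have := Finset.card_le_univ I
    rwa [card_PIdx] at this
  have hc1 := Finset.card_pos.2 (Finset.nonempty_iff_ne_empty.2 hI)
  set w := wA A I z.1 z.2
  have h1 := fibN_le_chVal A hT I z.1 ht (blk I)
  by_cases h2 : 2 ≤ I.card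
  · have h3 := le_chaosNormT A hT ∅ (insert (blk I) (sing Iᶜ)) (yt z.1 w (blk I))
      fun J _ => yt_sum_sq hx w _ J
    simp only [prod_yt z.1 w (zero_mem_blk I), ← wt_eq] at h3
    refine (mul_le_mul_of_nonneg_left (h1.trans h3) (pow_nonneg hε.le _)).trans ?_
    refine chaosNormT_le_Dbd A hT U hε (isPartitionPair_det (zero_mem_blk I) ?_ ?_) ?_ h2
    · intro k hk
      rw [mem_blk_val]
      exact Finset.mem_compl.1 hk
    · intro l
      simp only [Finset.mem_univ, true_iff, mem_blk, Finset.mem_compl]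
      by_cases h : l = 0
      · exact Or.inl (Or.inl h)
      · by_cases h' : (⟨l, h⟩ : PIdx d) ∈ I
        · exact Or.inl (Or.inr ⟨h, h'⟩)
        · exact Or.inr ⟨h, h'⟩
    · rw [Finset.card_insert_of_notMem (notMem_sing (zero_mem_blk I) _), card_sing,
        Finset.card_compl, card_PIdx]
      omega
  · have h4 : I.card = 1 := by omega
    obtain ⟨j, hj⟩ : ∃ j, j ∉ I := by
      by_contra! h
      have : I = Finset.univ := Finset.eq_univ_iff_forall.2 h
      rw [this, Finset.card_univ, card_PIdx] at h4
      omega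
    have h3 := le_chaosNormTFix A hT ∅ (insert (blk I) (sing (Iᶜ.erase j))) (yt z.1 w (blk I))
      (fun J _ => yt_sum_sq hx w _ J) j.1 (hx j)
    simp only [prod_yt z.1 w (zero_mem_blk I), mul_assoc, ← wt_erase z.1 hj] at h3
    simp only [mul_assoc] at h1
    rw [h4, pow_one]
    refine (mul_le_mul_of_nonneg_left ((h1.trans h3).trans
      (chaosNormTFix_le_sup A hT hU hz j (isPartitionPair_det (zero_mem_blk I) ?_ ?_) ?_))
      hε.le).trans (hatAlphaSup_le_Dbd A hT U hε)
    · intro k hk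
      rw [mem_blk_val]
      exact Finset.mem_compl.1 (Finset.mem_of_mem_erase hk)
    · intro l
      simp only [Finset.mem_univ, mem_blk, Finset.mem_compl, Finset.mem_erase, and_true]
      constructor
      · intro hl
        by_cases h : l = 0
        · exact Or.inl (Or.inl h)
        · by_cases h' : (⟨l, h⟩ : PIdx d) ∈ I
          · exact Or.inl (Or.inr ⟨h, h'⟩)
          · exact Or.inr ⟨h, fun h' => hl (congrArg Subtype.val h'), h'⟩
      · rintro ((rfl | ⟨h, h'⟩) | ⟨h, h', -⟩)
        · exact j.2.symm
        · rintro rfl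
          exact hj h'
        · exact fun h'' => h' (Subtype.ext h'')
    · rw [Finset.card_insert_of_notMem (notMem_sing (zero_mem_blk I) _), card_sing,
        Finset.card_erase_of_mem (Finset.mem_compl.2 hj), Finset.card_compl, card_PIdx]
      omega

/-! ### The second moment of the norm -/

/-- The Gaussian monomial attached to a multi-index. -/
noncomputable def mon (I : Finset (PIdx d)) (a : PIdx d → Fin n) (G : PIdx d × Fin n → ℝ) : ℝ :=
  ∏ k ∈ I, G (k, a k)

lemma mon_mul_integrable (I : Finset (PIdx d)) (a b : PIdx d → Fin n) :
    Integrable (fun G => mon I a G * mon I b G) (_root_.stdGaussian (PIdx d × Fin n)) := by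
  have hb : ∀ (a : PIdx d → Fin n) (G : PIdx d × Fin n → ℝ),
      |mon I a G| ≤ Real.exp (I.card * ∑ q, |G q|) := fun a G => by
    rw [mon, Finset.abs_prod, Real.exp_nat_mul, ← Finset.prod_const]
    exact Finset.prod_le_prod (fun _ _ => abs_nonneg _) fun J _ => abs_le_exp_sum G _
  refine gauss_integrable_of_le ?_ 1 (2 * I.card) fun G => ?_
  · refine Continuous.aestronglyMeasurable ?_
    unfold mon
    fun_prop
  · rw [abs_mul, one_mul, two_mul, add_mul, Real.exp_add]
    exact mul_le_mul (hb a G) (hb b G) (abs_nonneg _) (Real.exp_nonneg _)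

lemma gauss_sq_moment : ∫ s, s * s ∂gaussianReal 0 1 = 1 := by
  have h := variance_of_integral_eq_zero (X := fun s : ℝ => s) (μ := gaussianReal 0 1)
    (by fun_prop) (by simp)
  rw [variance_fun_id_gaussianReal] at h
  simpa [sq] using h.symm

/-- Orthonormality of the Gaussian monomials. -/
lemma mon_mul_integral (I : Finset (PIdx d)) (a b : PIdx d → Fin n) :
    ∫ G, mon I a G * mon I b G ∂_root_.stdGaussian (PIdx d × Fin n)
      = if ∀ k ∈ I, a k = b k then 1 else 0 := by
  let f : PIdx d × Fin n → ℝ → ℝ := fun q s => if q.1 ∈ I then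
    (if a q.1 = q.2 then s else 1) * (if b q.1 = q.2 then s else 1) else 1
  have h1 : ∀ G : PIdx d × Fin n → ℝ, mon I a G * mon I b G = ∏ q, f q (G q) := fun G => by
    rw [Fintype.prod_prod_type, mon, mon, ← Finset.prod_mul_distrib,
      ← Finset.prod_subset (Finset.subset_univ I)]
    · refine Finset.prod_congr rfl fun k hk => ?_
      simp only [f, hk, if_true]
      rw [Finset.prod_mul_distrib]
      simp
    · intro k _ hk
      simp [f, hk]
  simp only [h1]
  rw [_root_.stdGaussian, integral_fintype_prod_eq_prod]
  split_ifs with h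
  · refine Finset.prod_eq_one fun q _ => ?_
    by_cases hq : q.1 ∈ I
    · by_cases h' : b q.1 = q.2
      · simp only [f, hq, h q.1 hq, h', if_true]
        exact gauss_sq_moment
      · simp [f, hq, h q.1 hq, h']
    · simp [f, hq]
  · push Not at h
    obtain ⟨k, hk, hne⟩ := h
    refine Finset.prod_eq_zero (Finset.mem_univ (k, a k)) ?_
    simp [f, hk, hne.symm]

lemma mv_mix (I : Finset (PIdx d)) (x : PIdx d → Fin n → ℝ) (t : Fin m → ℝ)
    (G : PIdx d × Fin n → ℝ) (i1 : Fin n) :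
    mv (Bm A (mix I G x)) t i1 = ∑ i', mon I i' G * wA A I x t (ext0 i1 i') := by
  simp only [mv, Bm, prod_mix, wA, wt, mon, ext0_pos, Finset.sum_mul, Finset.mul_sum]
  rw [Finset.sum_comm]
  exact Finset.sum_congr rfl fun i' _ => Finset.sum_congr rfl fun j _ => by ring

lemma norm_sq_mix (I : Finset (PIdx d)) (x : PIdx d → Fin n → ℝ) (t : Fin m → ℝ)
    (G : PIdx d × Fin n → ℝ) :
    ‖mv (Bm A (mix I G x)) t‖ ^ 2 = ∑ i1, ∑ a, ∑ b, (mon I a G * mon I b G) *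
      (wA A I x t (ext0 i1 a) * wA A I x t (ext0 i1 b)) := by
  rw [EuclideanSpace.norm_sq_eq]
  refine Finset.sum_congr rfl fun i1 _ => ?_
  rw [Real.norm_eq_abs, sq_abs, mv_mix, sq, Finset.sum_mul_sum]
  exact Finset.sum_congr rfl fun i' _ => Finset.sum_congr rfl fun j _ => by ring

lemma fibN_sq_eq (I : Finset (PIdx d)) (w : (Fin (d + 1) → Fin n) → ℝ) :
    fibN w (blk I) ^ 2 = ∑ i1, ∑ a : PIdx d → Fin n, ∑ b : PIdx d → Fin n,
      (if ∀ k ∈ I, a k = b k then (1 : ℝ) else 0) * (w (ext0 i1 a) * w (ext0 i1 b)) := by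
  have hπ : ∀ (i1 i2 : Fin n) (a b : PIdx d → Fin n),
      ((fun l : {l // l ∈ blk I} => ext0 i2 b l.1) = fun l : {l // l ∈ blk I} => ext0 i1 a l.1)
        ↔ i1 = i2 ∧ ∀ k ∈ I, a k = b k := by
    intro i1 i2 a b
    constructor
    · intro h
      refine ⟨?_, fun k hk => ?_⟩
      · have := congrFun h ⟨0, zero_mem_blk I⟩
        simpa only [ext0_zero] using this.symm
      · have := congrFun h ⟨k.1, mem_blk_val.2 hk⟩
        simpa only [ext0_pos] using this.symm
    · rintro ⟨rfl, h⟩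
      funext ⟨l, hl⟩
      rcases mem_blk.1 hl with rfl | ⟨h0, hl'⟩
      · simp only [ext0_zero]
      · have e1 := ext0_pos i1 a ⟨l, h0⟩
        have e2 := ext0_pos i1 b ⟨l, h0⟩
        simp only at e1 e2 ⊢
        rw [e1, e2, h _ hl']
  have h1 : fibN w (blk I) ^ 2 = ∑ i, fib w (blk I) (fun l => i l.1) * w i := by
    rw [fibN_sq, ← fib_sum w (blk I) (fib w (blk I))]
    exact Finset.sum_congr rfl fun v _ => sq _
  rw [h1, sum_ext0]
  refine Finset.sum_congr rfl fun i1 _ => Finset.sum_congr rfl fun a _ => ?_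
  rw [fib, sum_ext0, Finset.sum_mul]
  rw [Finset.sum_eq_single i1]
  · rw [Finset.sum_mul]
    refine Finset.sum_congr rfl fun b _ => ?_
    simp only [hπ, true_and]
    split_ifs <;> ring
  · intro i2 _ hne
    simp only [hπ, hne.symm, false_and, if_false, Finset.sum_const_zero, zero_mul]
  · simp

lemma norm_mix_continuous (I : Finset (PIdx d)) (x : PIdx d → Fin n → ℝ) (t : Fin m → ℝ) :
    Continuous fun G => ‖mv (Bm A (mix I G x)) t‖ := by
  have : (fun G => ‖mv (Bm A (mix I G x)) t‖)
      = fun G => Real.sqrt (‖mv (Bm A (mix I G x)) t‖ ^ 2) := by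
    funext G
    rw [Real.sqrt_sq (norm_nonneg _)]
  rw [this]
  simp only [norm_sq_mix, mon]
  fun_prop

lemma norm_mix_integrable (hT : Adm T M) (I : Finset (PIdx d)) {x : PIdx d → Fin n → ℝ}
    (hx : ∀ k, ∑ i, x k i ^ 2 ≤ 1) {t : Fin m → ℝ} (ht : t ∈ T) :
    Integrable (fun G => ‖mv (Bm A (mix I G x)) t‖) (_root_.stdGaussian (PIdx d × Fin n)) := by
  refine ((bet_mix_integrable A hT I hx).const_mul 4).mono'
    (norm_mix_continuous A I x t).aestronglyMeasurable (Filter.Eventually.of_forall fun G => ?_)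
  rw [norm_norm]
  exact norm_le_bet hT _ ht

/-- The expected norm is at most the `L₂` norm, which is computed by orthonormality of the Gaussian
monomials. -/
lemma norm_mix_integral_le (hT : Adm T M) (I : Finset (PIdx d)) {x : PIdx d → Fin n → ℝ}
    (hx : ∀ k, ∑ i, x k i ^ 2 ≤ 1) {t : Fin m → ℝ} (ht : t ∈ T) :
    ∫ G, ‖mv (Bm A (mix I G x)) t‖ ∂_root_.stdGaussian (PIdx d × Fin n)
      ≤ fibN (wA A I x t) (blk I) := by
  set μ := _root_.stdGaussian (PIdx d × Fin n)
  set f : (PIdx d × Fin n → ℝ) → ℝ := fun G => ‖mv (Bm A (mix I G x)) t‖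
  have hμ : IsProbabilityMeasure μ := stdGaussian_isProb _
  have hf : Integrable f μ := norm_mix_integrable A hT I hx ht
  have hterm : ∀ i1 a b, Integrable (fun G : PIdx d × Fin n → ℝ => (mon I a G * mon I b G) *
      (wA A I x t (ext0 i1 a) * wA A I x t (ext0 i1 b))) μ := fun i1 a b =>
    (mon_mul_integrable I a b).mul_const _
  have hf2 : Integrable (fun G => f G ^ 2) μ := by
    simp only [f, norm_sq_mix]
    exact integrable_finsetSum _ fun i1 _ => integrable_finsetSum _ fun a _ =>
      integrable_finsetSum _ fun b _ => hterm i1 a b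
  have h_integ : ∫ G, f G ^ 2 ∂μ = fibN (wA A I x t) (blk I) ^ 2 := by
    simp only [f, norm_sq_mix]
    rw [fibN_sq_eq, integral_finsetSum _ fun i1 _ => integrable_finsetSum _ fun a _ =>
      integrable_finsetSum _ fun b _ => hterm i1 a b]
    refine Finset.sum_congr rfl fun i1 _ => ?_
    rw [integral_finsetSum _ fun a _ => integrable_finsetSum _ fun b _ => hterm i1 a b]
    refine Finset.sum_congr rfl fun a _ => ?_
    rw [integral_finsetSum _ fun b _ => hterm i1 a b]
    refine Finset.sum_congr rfl fun b _ => ?_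
    rw [integral_mul_const, mon_mul_integral]
  set c := ∫ G, f G ∂μ with hc
  have h0 : 0 ≤ ∫ G, (f G ^ 2 - 2 * c * f G + c ^ 2) ∂μ :=
    integral_nonneg fun G => by
      have := sq_nonneg (f G - c)
      simp only [Pi.zero_apply]
      linarith
  have h1 : ∫ G, (f G ^ 2 - 2 * c * f G + c ^ 2) ∂μ
      = fibN (wA A I x t) (blk I) ^ 2 - 2 * c * c + c ^ 2 := by
    have hs : Integrable (fun G => f G ^ 2 - 2 * c * f G) μ := hf2.sub (hf.const_mul _)
    rw [integral_add hs (integrable_const _), integral_sub hf2 (hf.const_mul _), integral_const_mul, h_integ]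
    simp [← hc]
  rw [h1] at h0
  have h2 : c ^ 2 ≤ fibN (wA A I x t) (blk I) ^ 2 := by linarith
  exact (abs_le_of_sq_le_sq' h2 (Real.sqrt_nonneg _)).2

/-- The expectation of `Phi` is at most a constant multiple of the covering diameter. -/
lemma Phi_integral_le (hT : Adm T M) (hd : 2 ≤ d) {U : Set (Pt n m d)}
    (hU : U ⊆ ballSet n m d T) {z : Pt n m d} (hz : z ∈ U) {ε : ℝ} (hε : 0 < ε) :
    Measurable (Phi A T ε z) ∧
    Integrable (Phi A T ε z) (_root_.stdGaussian (PIdx d × Fin n)) ∧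
    ∫ G, Phi A T ε z G ∂_root_.stdGaussian (PIdx d × Fin n) ≤ 2 ^ (d + 1) * Dbd A T U ε := by
  have hx := (hU hz).1
  have ht := (hU hz).2
  have ia := fun I : Finset (PIdx d) =>
    (norm_mix_integrable A hT I hx ht).const_mul (ε ^ I.card)
  have ib := fun I : Finset (PIdx d) =>
    (bet_mix_integrable A hT I hx).const_mul (ε ^ (I.card + 1))
  refine ⟨?_, ?_, ?_⟩
  · unfold Phi
    refine Measurable.add ?_ ?_
    · exact Finset.measurable_fun_sum _ fun I _ =>
        (norm_mix_continuous A I z.1 z.2).measurable.const_mul _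
    · exact Finset.measurable_fun_sum _ fun I _ => (bet_mix_measurable A hT I z.1).const_mul _
  · unfold Phi
    exact (integrable_finsetSum _ fun I _ => ia I).add (integrable_finsetSum _ fun I _ => ib I)
  · unfold Phi
    rw [integral_add (integrable_finsetSum _ fun I _ => ia I)
      (integrable_finsetSum _ fun I _ => ib I), integral_finsetSum _ fun I _ => ia I,
      integral_finsetSum _ fun I _ => ib I]
    simp only [integral_const_mul]
    have hD := Dbd_nonneg A hT U hε
    have hcard : Fintype.card (Finset (PIdx d)) = 2 ^ d := by
      rw [Fintype.card_finset, card_PIdx]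
    have h1 : ∑ I ∈ Finset.univ.erase (∅ : Finset (PIdx d)), ε ^ I.card *
        ∫ G, ‖mv (Bm A (mix I G z.1)) z.2‖ ∂_root_.stdGaussian (PIdx d × Fin n)
        ≤ 2 ^ d * Dbd A T U ε := by
      refine (Finset.sum_le_card_nsmul _ _ (Dbd A T U ε) fun I hI => ?_).trans ?_
      · exact (mul_le_mul_of_nonneg_left (norm_mix_integral_le A hT I hx ht)
          (pow_nonneg hε.le _)).trans
          (fibN_le_Dbd A hT hd hU hz hε (Finset.ne_of_mem_erase hI))
      · rw [nsmul_eq_mul]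
        refine mul_le_mul_of_nonneg_right ?_ hD
        have := Finset.card_le_univ (Finset.univ.erase (∅ : Finset (PIdx d)))
        rw [hcard] at this
        exact_mod_cast this
    have h2 : ∑ I : Finset (PIdx d), ε ^ (I.card + 1) *
        ∫ G, bet T (Bm A (mix I G z.1)) ∂_root_.stdGaussian (PIdx d × Fin n)
        ≤ 2 ^ d * Dbd A T U ε := by
      refine (Finset.sum_le_card_nsmul _ _ (Dbd A T U ε) fun I _ => ?_).trans ?_
      · by_cases hI : I = ∅
        · subst hI
          simp only [mix_empty, integral_const, probReal_univ, one_smul, Finset.card_empty,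
            zero_add, pow_one]
          exact (mul_le_mul_of_nonneg_left (bet_le_hatAlphaSup A hT (by omega) hU hz)
            hε.le).trans (hatAlphaSup_le_Dbd A hT U hε)
        · exact beta_le A hT U hε hI hx
      · rw [nsmul_eq_mul, Finset.card_univ, hcard]
        push_cast
        exact le_rfl
    rw [pow_succ]
    linarith

end alpha

/-! ### Conclusion -/

section final
variable {n m d : ℕ} {T : Set (Fin m → ℝ)} {M : ℝ} (A : (Fin (d + 1) → Fin n) → Fin m → ℝ)

lemma covNum_le {β : Type*} {S : Set β} {ρ : β → β → ℝ} {ε : ℝ} (c : Finset β)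
    (hc : ∀ y ∈ S, ∃ x ∈ c, ρ x y ≤ ε / 2) : covNum S ρ ε ≤ c.card := by
  refine csInf_le ⟨0, ?_⟩ ⟨c, rfl, fun y hy => ?_⟩
  · rintro N ⟨c', rfl, -⟩
    exact Nat.cast_nonneg _
  · obtain ⟨x, hx, hxy⟩ := hc y hy
    exact Set.mem_biUnion hx hxy

lemma exists_adm (h0 : T.Nonempty) (hb : Bornology.IsBounded T) (hs : T = -T) :
    ∃ M, Adm T M := by
  obtain ⟨R, hR⟩ := isBounded_iff_forall_norm_le.1 hb
  refine ⟨max R 0, h0, fun t ht => ?_, le_max_right _ _, fun t ht j => ?_⟩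
  · rw [hs] at ht
    exact Set.mem_neg.1 ht
  · exact (norm_le_pi_norm t j).trans ((hR t ht).trans (le_max_left _ _))

lemma Dbd_scale (hT : Adm T M) (U : Set (Pt n m d)) {ε L : ℝ} (hε : 0 < ε) (hL : 1 ≤ L) :
    Dbd A T U (ε / L) ≤ Dbd A T U ε / L := by
  have hL0 : 0 < L := by linarith
  unfold Dbd
  rw [add_div, Finset.sum_div]
  refine add_le_add (Finset.sum_le_sum fun k hk => ?_) (le_of_eq (by ring))
  have hk' := Finset.mem_range.1 hk
  rw [mul_div_right_comm]
  refine mul_le_mul_of_nonneg_right ?_ (sNorm_nonneg A hT k)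
  rw [div_pow]
  exact div_le_div_of_nonneg_left (pow_nonneg hε.le _) hL0 (le_self_pow₀ hL (by omega))

lemma rhoA_symm (z w : Pt n m d) : rhoA A z w = rhoA A w z := by
  rw [rhoA_eq, rhoA_eq, norm_sub_rev]

lemma rhoA_self (z : Pt n m d) : rhoA A z z = 0 := by
  rw [rhoA_eq, sub_self, norm_zero]

/-- For large `ε` a single ball centred at the origin suffices. -/
lemma covNum_le_one (hT : Adm T M) (hd : 2 ≤ d) {U : Set (Pt n m d)}
    (hU : U ⊆ ballSet n m d T) {ε : ℝ} (hε : 8 ≤ ε) :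
    covNum U (rhoA A) (Dbd A T U ε) ≤ 1 := by
  have h := covNum_le (S := U) (ρ := rhoA A) (ε := Dbd A T U ε) {(0 : Pt n m d)} fun y hy => ?_
  · simpa using h
  · refine ⟨0, Finset.mem_singleton_self _, ?_⟩
    have h0 : mv (Bm A (0 : Pt n m d).1) (0 : Pt n m d).2 = 0 := by
      ext i
      simp [mv]
    rw [rhoA_eq, h0, sub_zero]
    have h1 := norm_le_bet hT (Bm A y.1) (hU hy).2
    have h2 := bet_le_hatAlphaSup A hT (by omega) hU hy
    have h3 := hatAlphaSup_le_Dbd A hT U (ε := ε) (by linarith)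
    have h4 := mul_le_mul_of_nonneg_right hε (hatAlphaSup_nonneg A hT U)
    linarith

lemma covNum_le_exp (hT : Adm T M) (hd : 2 ≤ d) {U : Set (Pt n m d)}
    (hU : U ⊆ ballSet n m d T) {ε : ℝ} (hε : 0 < ε) :
    covNum U (rhoA A) (Dbd A T U ε)
      ≤ 2 * Real.exp ((256 + d / 2) * (ε / (12 * 2 ^ (d + 1)))⁻¹ ^ 2) := by
  set L : ℝ := 12 * 2 ^ (d + 1) with hLdef
  have hL : 1 ≤ L := by
    have : (1 : ℝ) ≤ 2 ^ (d + 1) := one_le_pow₀ (by norm_num)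
    linarith
  have hL0 : 0 < L := by linarith
  have hε' : 0 < ε / L := div_pos hε hL0
  set B := 2 * Real.exp ((256 + d / 2) * (ε / L)⁻¹ ^ 2) with hB
  have hB0 : 0 ≤ B := by positivity
  have hscale := Dbd_scale A hT U hε hL
  -- `6 Q ≤ Dbd ε / 2` because `L = 12 * 2 ^ (d + 1)`
  have hQ : 6 * (2 ^ (d + 1) * Dbd A T U (ε / L)) ≤ Dbd A T U ε / 2 := by
    have h1 : 6 * (2 ^ (d + 1) * (Dbd A T U ε / L)) = Dbd A T U ε / 2 := by
      rw [hLdef]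
      field_simp
      ring
    rw [← h1]
    gcongr
  have hcard : ∀ S : Finset (Pt n m d), (∀ z ∈ S, z ∈ U) →
      (∀ z ∈ S, ∀ w ∈ S, z ≠ w → Dbd A T U ε / 2 < rhoA A z w) → (S.card : ℝ) ≤ B := by
    intro S hS hsep
    have hP := fun z (hz : z ∈ S) => Phi_integral_le A hT hd hU (hS z hz) hε'
    exact packing_bound A hT hε' S (fun z hz => hU (hS z hz)) (fun z hz => (hP z hz).1)
      (fun z hz => (hP z hz).2.1) (fun z hz => (hP z hz).2.2)
      (fun z hz w hw hne => hQ.trans_lt (hsep z hz w hw hne))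
  obtain ⟨S, hSU, hsep, hnet⟩ := exists_net (rhoA A) (Dbd A T U ε / 2) (rhoA_symm A) U ⌊B⌋₊
    fun S hS hsep => Nat.le_floor (hcard S hS hsep)
  refine (covNum_le S fun y hy => ?_).trans (hcard S hSU hsep)
  rcases hnet y hy with h | h
  · refine ⟨y, h, ?_⟩
    rw [rhoA_self]
    linarith [Dbd_nonneg A hT U hε]
  · exact h

end final

/- Here the chaos is of order `d+1`: the paper's `d` equals `d+1 ≥ 3` below. -/
theorem entropy_bound_hatAlpha (d : ℕ) (hd : 2 ≤ d) :
    ∃ C : ℝ, 0 < C ∧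
      ∀ (n m : ℕ) (A : (Fin (d + 1) → Fin n) → Fin m → ℝ)
        (T : Set (Fin m → ℝ)), T.Nonempty → Bornology.IsBounded T → T = -T →
        ∀ U : Set (Pt n m d), U ⊆ ballSet n m d T →
        ∀ ε : ℝ, 0 < ε →
        covNum U (rhoA A)
            ((∑ k ∈ Finset.range d, ε ^ (d + 1 - k) * sNorm A T k)
              + ε * hatAlphaSup A T U)
          ≤ Real.exp (C * ε⁻¹ ^ 2) := by
  refine ⟨(256 + d / 2) * (12 * 2 ^ (d + 1)) ^ 2 + 64, by positivity, ?_⟩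
  intro n m A T hne hbdd hsymm U hU ε hε
  obtain ⟨M, hT⟩ := exists_adm hne hbdd hsymm
  change covNum U (rhoA A) (Dbd A T U ε) ≤ _
  rcases le_or_gt 8 ε with h8 | h8
  · exact (covNum_le_one A hT hd hU h8).trans (Real.one_le_exp (by positivity))
  · refine (covNum_le_exp A hT hd hU hε).trans ?_
    -- the factor `2` is absorbed by `exp (64 / ε ^ 2) ≥ e`
    have h1 : (2 : ℝ) ≤ Real.exp (64 * ε⁻¹ ^ 2) := by
      have h2 : (1 : ℝ) ≤ 64 * ε⁻¹ ^ 2 := by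
        rw [inv_pow, ← div_eq_mul_inv, one_le_div (by positivity)]
        nlinarith
      have := Real.add_one_le_exp (64 * ε⁻¹ ^ 2)
      linarith
    rw [add_mul _ (64 : ℝ), Real.exp_add, mul_comm (Real.exp _)]
    refine mul_le_mul h1 (le_of_eq ?_) (Real.exp_nonneg _) (Real.exp_nonneg _)
    congr 1
    rw [inv_div, div_eq_mul_inv]
    ring
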